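/- For every ε with 0 < ε < 1/3 there exists k₀ such that for every integer k ≥ k₀, setting n = ⌊(1/3 − ε)·k²/log k⌋, there exists a simple graph G on n vertices which is triangle-free (contains no clique of size 3) and has no independent set of size k (equivalently, the complement of G contains no clique of size k). Consequently the off-diagonal Ramsey number satisfies R(3,k) > (1/3 − ε)·k²/log k for all sufficiently large k. -/

import Mathlib

namespace TwoBite

open Finset

set_option linter.unusedSectionVars false

section RandomSubset

variable {α β ι : Type*} [DecidableEq α] [DecidableEq β]

/-- The expectation of `f S`, where `S` is a random subset of `E` that contains every element
independently with probability `p`. -/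
noncomputable def subsetExp (p : ℝ) (E : Finset α) (f : Finset α → ℝ) : ℝ :=
  ∑ S ∈ E.powerset, p ^ #S * (1 - p) ^ #(E \ S) * f S

variable {p : ℝ} {E : Finset α}

theorem subsetExp_prod (p : ℝ) (E : Finset α) (g : α → ℝ) :
    subsetExp p E (fun S => ∏ e ∈ S, g e) = ∏ e ∈ E, (1 - p + p * g e) := by
  have h : ∀ e ∈ E, 1 - p + p * g e = p * g e + (1 - p) := fun e _ => by ring
  rw [Finset.prod_congr rfl h, Finset.prod_add]
  refine Finset.sum_congr rfl fun S _ => ?_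
  rw [Finset.prod_mul_distrib, Finset.prod_const, Finset.prod_const]
  ring

theorem subsetExp_const (p : ℝ) (E : Finset α) (c : ℝ) : subsetExp p E (fun _ => c) = c := by
  have h := subsetExp_prod p E (fun _ => 1)
  simp only [Finset.prod_const_one, mul_one, sub_add_cancel] at h
  unfold subsetExp at h ⊢
  rw [← Finset.sum_mul]
  simp only [mul_one] at h
  rw [h, one_mul]

theorem subsetExp_mono (hp0 : 0 ≤ p) (hp1 : p ≤ 1) {f g : Finset α → ℝ}
    (h : ∀ S, S ⊆ E → f S ≤ g S) : subsetExp p E f ≤ subsetExp p E g := by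
  refine Finset.sum_le_sum fun S hS => ?_
  have : 0 ≤ 1 - p := by linarith
  exact mul_le_mul_of_nonneg_left (h S (Finset.mem_powerset.1 hS)) (by positivity)

theorem subsetExp_nonneg (hp0 : 0 ≤ p) (hp1 : p ≤ 1) {f : Finset α → ℝ}
    (h : ∀ S, S ⊆ E → 0 ≤ f S) : 0 ≤ subsetExp p E f := by
  rw [← subsetExp_const p E 0]
  exact subsetExp_mono hp0 hp1 h

theorem subsetExp_congr {f g : Finset α → ℝ} (h : ∀ S, S ⊆ E → f S = g S) :
    subsetExp p E f = subsetExp p E g :=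
  Finset.sum_congr rfl fun S hS => by rw [h S (Finset.mem_powerset.1 hS)]

theorem subsetExp_add (f g : Finset α → ℝ) :
    subsetExp p E (fun S => f S + g S) = subsetExp p E f + subsetExp p E g := by
  simp only [subsetExp, mul_add, Finset.sum_add_distrib]

theorem subsetExp_mul_left (c : ℝ) (f : Finset α → ℝ) :
    subsetExp p E (fun S => c * f S) = c * subsetExp p E f := by
  simp only [subsetExp, Finset.mul_sum]
  exact Finset.sum_congr rfl fun S _ => by ring

theorem subsetExp_sum (s : Finset ι) (f : ι → Finset α → ℝ) :
    subsetExp p E (fun S => ∑ i ∈ s, f i S) = ∑ i ∈ s, subsetExp p E (f i) := by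
  simp only [subsetExp, Finset.mul_sum]
  exact Finset.sum_comm

theorem subsetExp_empty (f : Finset α → ℝ) : subsetExp p ∅ f = f ∅ := by
  simp [subsetExp]

theorem subsetExp_insert {a : α} (ha : a ∉ E) (f : Finset α → ℝ) :
    subsetExp p (insert a E) f =
      (1 - p) * subsetExp p E f + p * subsetExp p E (fun S => f (insert a S)) := by
  unfold subsetExp
  rw [Finset.sum_powerset_insert ha, Finset.mul_sum, Finset.mul_sum]
  congr 1
  · refine Finset.sum_congr rfl fun S hS => ?_
    have haS : a ∉ S := fun h => ha (Finset.mem_powerset.1 hS h)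
    rw [Finset.insert_sdiff_of_notMem _ haS,
      Finset.card_insert_of_notMem (fun h => ha (Finset.mem_sdiff.1 h).1)]
    ring
  · refine Finset.sum_congr rfl fun S hS => ?_
    have haS : a ∉ S := fun h => ha (Finset.mem_powerset.1 hS h)
    rw [Finset.card_insert_of_notMem haS, Finset.insert_sdiff_insert,
      Finset.sdiff_insert_of_notMem ha]
    ring

theorem subsetExp_union {E₁ E₂ : Finset α} (h : Disjoint E₁ E₂) (f : Finset α → ℝ) :
    subsetExp p (E₁ ∪ E₂) f = subsetExp p E₁ (fun S => subsetExp p E₂ (fun T => f (S ∪ T))) := by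
  induction E₁ using Finset.induction_on generalizing f with
  | empty => simp [subsetExp_empty]
  | insert a E ha ih =>
    rw [Finset.disjoint_insert_left] at h
    have ha' : a ∉ E ∪ E₂ := by simp [ha, h.1]
    rw [Finset.insert_union, subsetExp_insert ha', subsetExp_insert ha, ih h.2, ih h.2]
    simp only [Finset.insert_union]

theorem subsetExp_image {g : β → α} (A : Finset β) (hg : Set.InjOn g A) (f : Finset α → ℝ) :
    subsetExp p (A.image g) f = subsetExp p A (fun S => f (S.image g)) := by
  induction A using Finset.induction_on generalizing f with
  | empty => simp [subsetExp_empty]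
  | insert a A ha ih =>
    have hA : Set.InjOn g A := hg.mono (by simp)
    have ha' : g a ∉ A.image g := by
      intro h
      obtain ⟨b, hb, hab⟩ := Finset.mem_image.1 h
      have := hg (by simp [hb]) (by simp) hab
      exact ha (this ▸ hb)
    rw [Finset.image_insert, subsetExp_insert ha', subsetExp_insert ha, ih hA, ih hA]
    simp only [Finset.image_insert]

/-- Factorisation of the expectation over a disjoint family of ground sets. -/
theorem subsetExp_biUnion_prod [DecidableEq ι] (s : Finset ι) (E : ι → Finset α)
    (hE : (s : Set ι).PairwiseDisjoint E) (g : ι → Finset α → ℝ) :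
    subsetExp p (s.biUnion E) (fun S => ∏ i ∈ s, g i (S ∩ E i)) =
      ∏ i ∈ s, subsetExp p (E i) (g i) := by
  induction s using Finset.induction_on with
  | empty => simp [subsetExp_empty]
  | insert a s ha ih =>
    have hs : (s : Set ι).PairwiseDisjoint E := hE.subset (by simp)
    have hd : Disjoint (E a) (s.biUnion E) := by
      rw [Finset.disjoint_biUnion_right]
      intro i hi
      exact hE (by simp) (by simp [hi]) (fun h => ha (h ▸ hi))
    rw [Finset.biUnion_insert, subsetExp_union hd, Finset.prod_insert ha, ← ih hs]
    have : ∀ S, S ⊆ E a → subsetExp p (s.biUnion E)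
        (fun T => ∏ i ∈ insert a s, g i ((S ∪ T) ∩ E i)) =
        subsetExp p (s.biUnion E) (fun T => ∏ i ∈ s, g i (T ∩ E i)) * g a S := by
      intro S hS
      rw [mul_comm, ← subsetExp_mul_left]
      refine subsetExp_congr fun T hT => ?_
      rw [Finset.prod_insert ha]
      congr 1
      · congr 1
        rw [Finset.union_inter_distrib_right, Finset.inter_eq_left.2 hS,
          (Finset.disjoint_iff_inter_eq_empty.1 (hd.symm.mono_left hT)), Finset.union_empty]
      · refine Finset.prod_congr rfl fun i hi => ?_
        have hai : Disjoint (E a) (E i) := (Finset.disjoint_biUnion_right _ _ _).1 hd i hi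
        rw [Finset.union_inter_distrib_right,
          (Finset.disjoint_iff_inter_eq_empty.1 (hai.mono_left hS)), Finset.empty_union]
    rw [subsetExp_congr this]
    simp_rw [mul_comm _ (g a _)]
    simp only [mul_comm (g a _) _]
    rw [subsetExp_mul_left, mul_comm]

/-- The moment generating function of the number of chosen elements of `C`. -/
theorem subsetExp_pow_card_inter (p : ℝ) (E C : Finset α) (t : ℝ) :
    subsetExp p E (fun S => t ^ #(S ∩ C)) = (1 - p + p * t) ^ #(E ∩ C) := by
  have h := subsetExp_prod p E (fun e => if e ∈ C then t else 1)
  have h1 : ∀ S : Finset α, (∏ e ∈ S, if e ∈ C then t else 1) = t ^ #(S ∩ C) := by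
    intro S
    rw [Finset.prod_ite, Finset.prod_const_one, mul_one, Finset.prod_const, Finset.filter_mem_eq_inter]
  simp only [h1] at h
  rw [h]
  have h2 : ∀ e, (1 - p + p * if e ∈ C then t else 1) = if e ∈ C then 1 - p + p * t else 1 := by
    intro e; split_ifs <;> ring
  simp only [h2]
  rw [Finset.prod_ite, Finset.prod_const_one, mul_one, Finset.prod_const, Finset.filter_mem_eq_inter]

theorem one_sub_add_mul_pow_le {t M : ℝ} (hp0 : 0 ≤ p) (hp1 : p ≤ 1) (ht : 0 ≤ t) {c : ℕ}
    (hc : (c : ℝ) ≤ M) : (1 - p + p * t) ^ c ≤ Real.exp (p * t * M) := by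
  have h0 : 0 ≤ 1 - p + p * t := by nlinarith
  calc (1 - p + p * t) ^ c ≤ (Real.exp (p * t)) ^ c := by
        refine pow_le_pow_left₀ h0 ?_ c
        have := Real.add_one_le_exp (p * t)
        linarith
    _ = Real.exp (p * t * c) := by rw [← Real.exp_nat_mul]; ring_nf
    _ ≤ _ := by
        apply Real.exp_le_exp.2
        exact mul_le_mul_of_nonneg_left hc (by positivity)

open Classical in
/-- A Chernoff bound for the number of elements in a set that is determined by the part of the
random set that was exposed before. -/
theorem subsetExp_exposed_card_le {E₁ E₂ : Finset α} (h : Disjoint E₁ E₂) (hp0 : 0 ≤ p)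
    (hp1 : p ≤ 1) {t M : ℝ} (ht : 1 ≤ t) (i : ℕ) (good : Finset α → Prop)
    (C : Finset α → Finset α) (hC : ∀ S, S ⊆ E₁ → good S → (#(C S) : ℝ) ≤ M) :
    subsetExp p (E₁ ∪ E₂)
      (fun S => if good (S ∩ E₁) ∧ i ≤ #(S ∩ E₂ ∩ C (S ∩ E₁)) then 1 else 0) ≤
      Real.exp (p * t * M) / t ^ i := by
  rw [subsetExp_union h]
  have ht0 : 0 < t := by linarith
  rw [← subsetExp_const p E₁ (Real.exp (p * t * M) / t ^ i)]
  refine subsetExp_mono hp0 hp1 fun S hS => ?_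
  by_cases hg : good S
  · calc _ ≤ subsetExp p E₂ (fun T => (1 / t ^ i) * t ^ #(T ∩ C S)) := by
          refine subsetExp_mono hp0 hp1 fun T hT => ?_
          have e1 : (S ∪ T) ∩ E₁ = S := by
            rw [Finset.union_inter_distrib_right, Finset.inter_eq_left.2 hS,
              Finset.disjoint_iff_inter_eq_empty.1 (h.symm.mono_left hT), Finset.union_empty]
          have e2 : (S ∪ T) ∩ E₂ = T := by
            rw [Finset.union_inter_distrib_right, Finset.inter_eq_left.2 hT,
              Finset.disjoint_iff_inter_eq_empty.1 (h.mono_left hS), Finset.empty_union]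
          rw [e1, e2]
          split_ifs with hi
          · rw [div_mul_eq_mul_div, one_mul, one_le_div (by positivity)]
            exact pow_le_pow_right₀ ht hi.2
          · positivity
      _ = (1 / t ^ i) * (1 - p + p * t) ^ #(E₂ ∩ C S) := by
          rw [subsetExp_mul_left, subsetExp_pow_card_inter]
      _ ≤ (1 / t ^ i) * Real.exp (p * t * M) := by
          refine mul_le_mul_of_nonneg_left ?_ (by positivity)
          refine one_sub_add_mul_pow_le hp0 hp1 ht0.le (le_trans ?_ (hC S hS hg))
          exact_mod_cast Finset.card_le_card Finset.inter_subset_right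
      _ = _ := by ring
  · have : ∀ T, T ⊆ E₂ → (if good ((S ∪ T) ∩ E₁) ∧
        i ≤ #((S ∪ T) ∩ E₂ ∩ C ((S ∪ T) ∩ E₁)) then (1 : ℝ) else 0) = 0 := by
      intro T hT
      have e1 : (S ∪ T) ∩ E₁ = S := by
        rw [Finset.union_inter_distrib_right, Finset.inter_eq_left.2 hS,
          Finset.disjoint_iff_inter_eq_empty.1 (h.symm.mono_left hT), Finset.union_empty]
      rw [e1, if_neg (fun h => hg h.1)]
    rw [subsetExp_congr this, subsetExp_const]
    positivity

/-- The probability that the random subset of `E` has the property `P`. -/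
noncomputable def subsetProb (p : ℝ) (E : Finset α) (P : Finset α → Prop) : ℝ :=
  open Classical in subsetExp p E (fun S => if P S then 1 else 0)

theorem subsetProb_mono (hp0 : 0 ≤ p) (hp1 : p ≤ 1) {P Q : Finset α → Prop}
    (h : ∀ S, S ⊆ E → P S → Q S) : subsetProb p E P ≤ subsetProb p E Q := by
  classical
  refine subsetExp_mono hp0 hp1 fun S hS => ?_
  by_cases hP : P S
  · simp [hP, h S hS hP]
  · rw [if_neg hP]; positivity

theorem subsetProb_or (hp0 : 0 ≤ p) (hp1 : p ≤ 1) (P Q : Finset α → Prop) :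
    subsetProb p E (fun S => P S ∨ Q S) ≤ subsetProb p E P + subsetProb p E Q := by
  classical
  unfold subsetProb
  rw [← subsetExp_add]
  refine subsetExp_mono hp0 hp1 fun S _ => ?_
  by_cases hP : P S <;> by_cases hQ : Q S <;> simp [hP, hQ]

theorem subsetProb_exists (hp0 : 0 ≤ p) (hp1 : p ≤ 1) (s : Finset ι)
    (P : ι → Finset α → Prop) :
    subsetProb p E (fun S => ∃ i ∈ s, P i S) ≤ ∑ i ∈ s, subsetProb p E (P i) := by
  classical
  unfold subsetProb
  rw [← subsetExp_sum]
  refine subsetExp_mono hp0 hp1 fun S _ => ?_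
  split_ifs with h
  · obtain ⟨i, hi, hP⟩ := h
    have := Finset.single_le_sum (f := fun i => if P i S then (1 : ℝ) else 0)
      (fun j _ => by positivity) hi
    simpa [hP] using this
  · exact Finset.sum_nonneg fun j _ => by positivity

theorem subsetProb_exists_le (hp0 : 0 ≤ p) (hp1 : p ≤ 1) (s : Finset ι)
    (P : ι → Finset α → Prop) {b : ℝ} (h : ∀ i ∈ s, subsetProb p E (P i) ≤ b) :
    subsetProb p E (fun S => ∃ i ∈ s, P i S) ≤ #s * b := by
  refine (subsetProb_exists hp0 hp1 s P).trans ((Finset.sum_le_sum h).trans ?_)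
  rw [Finset.sum_const, nsmul_eq_mul]

theorem exists_not_of_subsetProb_lt_one {P : Finset α → Prop} (h : subsetProb p E P < 1) :
    ∃ S ⊆ E, ¬ P S := by
  classical
  by_contra! hc
  have : subsetProb p E P = 1 := by
    unfold subsetProb
    exact (subsetExp_congr fun S hS => by rw [if_pos (hc S hS)]).trans (subsetExp_const p E 1)
  linarith

theorem subsetProb_exposed_card_le {E₁ E₂ : Finset α} (h : Disjoint E₁ E₂) (hp0 : 0 ≤ p)
    (hp1 : p ≤ 1) {t M : ℝ} (ht : 1 ≤ t) (i : ℕ) (good : Finset α → Prop)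
    (C : Finset α → Finset α) (hC : ∀ S, S ⊆ E₁ → good S → (#(C S) : ℝ) ≤ M) :
    subsetProb p (E₁ ∪ E₂)
      (fun S => good (S ∩ E₁) ∧ i ≤ #(S ∩ E₂ ∩ C (S ∩ E₁))) ≤ Real.exp (p * t * M) / t ^ i := by
  classical
  unfold subsetProb
  convert subsetExp_exposed_card_le h hp0 hp1 ht i good C hC

theorem subsetProb_card_inter_le (hp0 : 0 ≤ p) (hp1 : p ≤ 1) {t M : ℝ} (ht : 1 ≤ t) (i : ℕ)
    (C : Finset α) (hC : (#C : ℝ) ≤ M) :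
    subsetProb p E (fun S => i ≤ #(S ∩ C)) ≤ Real.exp (p * t * M) / t ^ i := by
  have h := subsetProb_exposed_card_le (Finset.disjoint_empty_left E) hp0 hp1 ht i
    (fun _ => True) (fun _ => C) (fun _ _ _ => hC)
  rw [Finset.empty_union] at h
  refine le_trans (subsetProb_mono hp0 hp1 fun S hS hi => ⟨trivial, ?_⟩) h
  rwa [Finset.inter_eq_left.2 hS]

end RandomSubset

section Construction

variable {V M : Type*} [DecidableEq V] [DecidableEq M]

/-- Adjacency in the coloured base graph whose edge set is `S`. -/
def BAdj (S : Finset (Bool × Sym2 M)) (c : Bool) (x y : M) : Prop :=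
  x ≠ y ∧ (c, s(x, y)) ∈ S

instance (S : Finset (Bool × Sym2 M)) (c : Bool) : DecidableRel (BAdj S c) :=
  fun _ _ => inferInstanceAs (Decidable (_ ∧ _))

theorem BAdj.symm {S : Finset (Bool × Sym2 M)} {c : Bool} {x y : M} (h : BAdj S c x y) :
    BAdj S c y x := ⟨h.1.symm, by rw [Sym2.eq_swap]; exact h.2⟩

theorem BAdj.mono {S T : Finset (Bool × Sym2 M)} (hST : S ⊆ T) {c : Bool} {x y : M}
    (h : BAdj S c x y) : BAdj T c x y := ⟨h.1, hST h.2⟩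

/-- The graph obtained by pulling back two base graphs along the maps `π` and deleting every pair
that has a common neighbour in one of the two base graphs. -/
def twoBite (π : Bool → V → M) (S : Finset (Bool × Sym2 M)) : SimpleGraph V where
  Adj u v := (∃ c, BAdj S c (π c u) (π c v)) ∧
    ¬ ∃ c x, BAdj S c (π c u) x ∧ BAdj S c (π c v) x
  symm := ⟨fun _ _ h => ⟨h.1.imp fun _ h => h.symm,
    fun ⟨c, x, h1, h2⟩ => h.2 ⟨c, x, h2, h1⟩⟩⟩
  loopless := ⟨fun _ h => h.1.elim fun _ h => h.1 rfl⟩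

theorem twoBite_cliqueFree (π : Bool → V → M) (S : Finset (Bool × Sym2 M)) :
    (twoBite π S).CliqueFree 3 := by
  intro T hT
  obtain ⟨a, b, c, hab, hac, hbc, -⟩ := SimpleGraph.is3Clique_iff.1 hT
  obtain ⟨⟨i, hi⟩, hab'⟩ := hab
  obtain ⟨⟨j, hj⟩, hac'⟩ := hac
  obtain ⟨⟨l, hl⟩, hbc'⟩ := hbc
  have : i = j ∨ i = l ∨ j = l := by
    cases i <;> cases j <;> cases l <;> simp
  rcases this with rfl | rfl | rfl
  · exact hbc' ⟨i, _, hi.symm, hj.symm⟩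
  · exact hac' ⟨i, _, hi, hl.symm⟩
  · exact hab' ⟨j, _, hj, hl⟩

/-- The neighbours of `x` in the base graph of colour `c` that lie in `A`. -/
def nbr (S : Finset (Bool × Sym2 M)) (c : Bool) (A : Finset M) (x : M) : Finset M :=
  A.filter (BAdj S c x)

theorem mem_nbr {S : Finset (Bool × Sym2 M)} {c : Bool} {A : Finset M} {x y : M} :
    y ∈ nbr S c A x ↔ y ∈ A ∧ BAdj S c x y := by simp [nbr]

/-- The projection of a vertex set to the base graph of colour `c`. -/
def proj (π : Bool → V → M) (I : Finset V) (c : Bool) : Finset M := I.image (π c)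

/-- Every projection of `I` has maximum degree at most `Δ` in the base graphs. -/
def LowDegree (π : Bool → V → M) (Δ : ℝ) (I : Finset V) (S : Finset (Bool × Sym2 M)) : Prop :=
  ∀ c, ∀ x ∈ proj π I c, (#(nbr S c (proj π I c) x) : ℝ) ≤ Δ

/-- `ρ c` chooses a representative in `I` for every element of the projection of colour `c`. -/
def IsSection (π : Bool → V → M) (I : Finset V) (ρ : Bool → M → V) : Prop :=
  ∀ c, ∀ y ∈ proj π I c, ρ c y ∈ I ∧ π c (ρ c y) = y

theorem exists_isSection (π : Bool → V → M) (I : Finset V) [Nonempty V] :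
    ∃ ρ, IsSection π I ρ := by
  have : ∀ c, ∀ y : M, ∃ u, y ∈ proj π I c → u ∈ I ∧ π c u = y := by
    intro c y
    by_cases h : y ∈ proj π I c
    · obtain ⟨u, hu, e⟩ := Finset.mem_image.1 h
      exact ⟨u, fun _ => ⟨hu, e⟩⟩
    · exact ⟨Classical.arbitrary V, fun h' => absurd h' h⟩
  choose ρ hρ using this
  exact ⟨ρ, fun c y hy => hρ c y hy⟩

/-- The coloured unordered pair that belongs to an ordered pair. -/
def toPair (c : Bool) (q : M × M) : Bool × Sym2 M := (c, s(q.1, q.2))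

/-- The pairs of colour `c` inside the projection of `I` whose representatives have a common
neighbour of colour `c'` in the projection of `I`. -/
def innerPairs (π : Bool → V → M) (I : Finset V) (ρ : Bool → M → V) (c c' : Bool)
    (S : Finset (Bool × Sym2 M)) : Finset (Bool × Sym2 M) :=
  ((proj π I c).offDiag.filter fun q =>
    ∃ x ∈ proj π I c', π c' (ρ c q.1) ≠ π c' (ρ c q.2) ∧
      BAdj S c' (π c' (ρ c q.1)) x ∧ BAdj S c' (π c' (ρ c q.2)) x).image (toPair c)

/-- The ordered pairs of colour `c` inside the projection of `I` whose representatives do not have a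
common neighbour outside the projections of `I`. -/
def openOrdered [Fintype M] (π : Bool → V → M) (I : Finset V) (ρ : Bool → M → V)
    (S : Finset (Bool × Sym2 M)) (c : Bool) : Finset (M × M) :=
  (proj π I c).offDiag.filter fun q =>
    (∀ c', π c' (ρ c q.1) ≠ π c' (ρ c q.2)) ∧
    ¬ ∃ c', ∃ x, x ∉ proj π I c' ∧
      BAdj S c' (π c' (ρ c q.1)) x ∧ BAdj S c' (π c' (ρ c q.2)) x

/-- The coloured pairs inside the projections of `I` whose representatives do not have a common
neighbour outside the projections of `I`. -/
def openPairs [Fintype M] (π : Bool → V → M) (I : Finset V) (ρ : Bool → M → V)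
    (S : Finset (Bool × Sym2 M)) : Finset (Bool × Sym2 M) :=
  univ.biUnion fun c => (openOrdered π I ρ S c).image (toPair c)

theorem inter_openPairs_subset [Fintype M] {π : Bool → V → M} {I : Finset V} {ρ : Bool → M → V}
    (hρ : IsSection π I ρ) {S : Finset (Bool × Sym2 M)}
    (hI : ∀ u ∈ I, ∀ v ∈ I, ¬ (twoBite π S).Adj u v) :
    S ∩ openPairs π I ρ S ⊆
      univ.biUnion fun c : Bool × Bool => S ∩ innerPairs π I ρ c.1 c.2 S := by
  intro e he
  simp only [openPairs, openOrdered, toPair, mem_inter, mem_biUnion, mem_univ, true_and, mem_image,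
    mem_filter, mem_offDiag] at he
  obtain ⟨heS, c, ⟨y, y'⟩, ⟨⟨hy, hy', hne⟩, hnd, hno⟩, rfl⟩ := he
  simp only at hy hy' hne hnd hno heS
  obtain ⟨h1, h2⟩ := hρ c y hy
  obtain ⟨h1', h2'⟩ := hρ c y' hy'
  have := hI _ h1 _ h1'
  simp only [twoBite, not_and, not_not] at this
  obtain ⟨c', x, hx, hx'⟩ := this ⟨c, by rw [h2, h2']; exact ⟨hne, heS⟩⟩
  have hxA : x ∈ proj π I c' := by
    by_contra hxA
    exact hno ⟨c', x, hxA, hx, hx'⟩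
  simp only [mem_biUnion, mem_univ, true_and, mem_inter, innerPairs, mem_image, mem_filter,
    mem_offDiag]
  exact ⟨(c, c'), heS, (y, y'), ⟨⟨hy, hy', hne⟩, x, hxA, hnd c', hx, hx'⟩, rfl⟩

theorem card_le_two_mul_card_image_toPair (c : Bool) (P : Finset (M × M)) :
    #P ≤ 2 * #(P.image (toPair c)) := by
  refine Finset.card_le_mul_card_image P 2 fun b hb => ?_
  obtain ⟨⟨y, y'⟩, -, rfl⟩ := Finset.mem_image.1 hb
  refine le_trans (Finset.card_le_card (t := {(y, y'), (y', y)}) ?_) Finset.card_le_two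
  rintro ⟨a, a'⟩ ha
  have h := (Finset.mem_filter.1 ha).2
  simp only [toPair, Prod.mk.injEq, true_and, Sym2.eq_iff] at h
  simp only [mem_insert, mem_singleton, Prod.mk.injEq]
  exact h

theorem sum_card_openOrdered_le [Fintype M] (π : Bool → V → M) (I : Finset V) (ρ : Bool → M → V)
    (S : Finset (Bool × Sym2 M)) :
    ∑ c, #(openOrdered π I ρ S c) ≤ 2 * #(openPairs π I ρ S) := by
  rw [openPairs, Finset.card_biUnion, Finset.mul_sum]
  · exact Finset.sum_le_sum fun c _ => card_le_two_mul_card_image_toPair c _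
  · intro c _ c' _ hcc
    rw [Function.onFun, Finset.disjoint_left]
    intro e he he'
    obtain ⟨q, -, rfl⟩ := Finset.mem_image.1 he
    obtain ⟨q', -, h⟩ := Finset.mem_image.1 he'
    exact hcc (congrArg Prod.fst h).symm

/-- The number of elements of `I` above `y`. -/
def wt (π : Bool → V → M) (I : Finset V) (c : Bool) (y : M) : ℕ := #(I.filter fun u => π c u = y)

/-- The number of pairs of a weighted set that count as closed if the set is the neighbourhood of
a vertex. -/
def pairWeight (w : M → ℕ) (N : Finset M) : ℕ := ∑ q ∈ N.offDiag, (1 + w q.1 * w q.2)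

variable [Fintype M] {π : Bool → V → M} {I : Finset V} {ρ : Bool → M → V}

/-- The ordered pairs of colour `c` whose representatives have distinct projections of colour `c'`
that are both adjacent to `x`. -/
def closedBy (π : Bool → V → M) (I : Finset V) (ρ : Bool → M → V) (S : Finset (Bool × Sym2 M))
    (c c' : Bool) (x : M) : Finset (M × M) :=
  (proj π I c).offDiag.filter fun q => π c' (ρ c q.1) ≠ π c' (ρ c q.2) ∧
    BAdj S c' (π c' (ρ c q.1)) x ∧ BAdj S c' (π c' (ρ c q.2)) x

theorem pi_mem_proj {u : V} (hu : u ∈ I) (c : Bool) : π c u ∈ proj π I c :=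
  Finset.mem_image_of_mem _ hu

theorem card_closedBy_self_le (hρ : IsSection π I ρ) (S : Finset (Bool × Sym2 M)) (c : Bool)
    (x : M) : #(closedBy π I ρ S c c x) ≤ #(nbr S c (proj π I c) x).offDiag := by
  refine Finset.card_le_card fun q hq => ?_
  simp only [closedBy, mem_filter, mem_offDiag] at hq
  obtain ⟨⟨h1, h2, h3⟩, -, h4, h5⟩ := hq
  rw [(hρ c _ h1).2] at h4
  rw [(hρ c _ h2).2] at h5
  simp only [mem_offDiag, mem_nbr]
  exact ⟨⟨h1, h4.symm⟩, ⟨h2, h5.symm⟩, h3⟩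

theorem isSection_injOn (hρ : IsSection π I ρ) (c : Bool) :
    Set.InjOn (ρ c) (proj π I c : Set M) := by
  intro a ha b hb h
  rw [← (hρ c a ha).2, ← (hρ c b hb).2, h]

theorem card_closedBy_le (hρ : IsSection π I ρ) (S : Finset (Bool × Sym2 M)) (c c' : Bool)
    (x : M) : #(closedBy π I ρ S c c' x) ≤
      ∑ q ∈ (nbr S c' (proj π I c') x).offDiag, wt π I c' q.1 * wt π I c' q.2 := by
  rw [Finset.card_eq_sum_card_fiberwise (f := fun q => (π c' (ρ c q.1), π c' (ρ c q.2)))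
    (t := (nbr S c' (proj π I c') x).offDiag)]
  · refine Finset.sum_le_sum fun z _ => ?_
    rw [wt, wt, ← Finset.card_product]
    refine Finset.card_le_card_of_injOn (fun q => (ρ c q.1, ρ c q.2)) ?_ ?_
    · rintro q hq
      simp only [closedBy, coe_filter, mem_filter, mem_offDiag, Set.mem_ofPred_eq] at hq
      obtain ⟨⟨⟨h1, h2, h3⟩, -⟩, rfl⟩ := hq
      simp [(hρ c _ h1).1, (hρ c _ h2).1]
    · rintro q hq q' hq' h
      simp only [closedBy, coe_filter, mem_filter, mem_offDiag, Set.mem_ofPred_eq] at hq hq'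
      simp only [Prod.mk.injEq] at h
      exact Prod.ext (isSection_injOn hρ c hq.1.1.1 hq'.1.1.1 h.1)
        (isSection_injOn hρ c hq.1.1.2.1 hq'.1.1.2.1 h.2)
  · intro q hq
    simp only [closedBy, coe_filter, mem_offDiag, Set.mem_ofPred_eq] at hq
    obtain ⟨⟨h1, h2, h3⟩, h4, h5, h6⟩ := hq
    simp only [coe_offDiag, Set.mem_offDiag, mem_coe, mem_nbr]
    exact ⟨⟨pi_mem_proj (hρ c _ h1).1 _, h5.symm⟩, ⟨pi_mem_proj (hρ c _ h2).1 _, h6.symm⟩, h4⟩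

theorem sum_card_closedBy_le (hρ : IsSection π I ρ) (S : Finset (Bool × Sym2 M)) (c' : Bool)
    (x : M) : ∑ c, #(closedBy π I ρ S c c' x) ≤
      pairWeight (wt π I c') (nbr S c' (proj π I c') x) := by
  have h : ∑ c, #(closedBy π I ρ S c c' x) =
      #(closedBy π I ρ S c' c' x) + #(closedBy π I ρ S (!c') c' x) := by
    cases c' <;> simp [add_comm]
  rw [h, pairWeight, Finset.sum_add_distrib]
  refine add_le_add ?_ (card_closedBy_le hρ S _ c' x)
  simpa using card_closedBy_self_le hρ S c' x

theorem card_coincident_le (hρ : IsSection π I ρ) (c : Bool) {F : ℕ}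
    (hF : ∀ c y, wt π I c y ≤ F) :
    #((proj π I c).offDiag.filter fun q => ∃ c', π c' (ρ c q.1) = π c' (ρ c q.2)) ≤ #I * F := by
  calc _ ≤ #(I.sigma fun u => I.filter fun v => π (!c) v = π (!c) u) := by
        refine Finset.card_le_card_of_injOn (fun q => ⟨ρ c q.1, ρ c q.2⟩) ?_ ?_
        · rintro q hq
          simp only [coe_filter, mem_offDiag, Set.mem_ofPred_eq] at hq
          obtain ⟨⟨h1, h2, h3⟩, c', h4⟩ := hq
          have hc : c' = !c := by
            by_contra hc
            have : c' = c := by cases c <;> cases c' <;> simp_all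
            subst this
            rw [(hρ c' _ h1).2, (hρ c' _ h2).2] at h4
            exact h3 h4
          subst hc
          simp [(hρ c _ h1).1, (hρ c _ h2).1, h4]
        · rintro q hq q' hq' h
          simp only [coe_filter, mem_offDiag, Set.mem_ofPred_eq] at hq hq'
          simp only [Sigma.mk.injEq, heq_eq_eq] at h
          exact Prod.ext (isSection_injOn hρ c hq.1.1 hq'.1.1 h.1)
            (isSection_injOn hρ c hq.1.2.1 hq'.1.2.1 h.2)
    _ = ∑ u ∈ I, wt π I (!c) (π (!c) u) := by rw [Finset.card_sigma]; rfl
    _ ≤ #I * F := by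
        rw [← smul_eq_mul]
        exact Finset.sum_le_card_nsmul _ _ _ fun u _ => hF _ _

theorem sum_card_offDiag_le (hρ : IsSection π I ρ) {F : ℕ} (hF : ∀ c y, wt π I c y ≤ F)
    (S : Finset (Bool × Sym2 M)) :
    ∑ c, #(proj π I c).offDiag ≤ 2 * #(openPairs π I ρ S) + 2 * (#I * F) +
      ∑ c, ∑ x ∈ univ \ proj π I c, pairWeight (wt π I c) (nbr S c (proj π I c) x) := by
  have key : ∀ c, #(proj π I c).offDiag ≤ #(openOrdered π I ρ S c) + #I * F +
      ∑ c', ∑ x ∈ univ \ proj π I c', #(closedBy π I ρ S c c' x) := by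
    intro c
    calc #(proj π I c).offDiag ≤ #((openOrdered π I ρ S c ∪
          ((proj π I c).offDiag.filter fun q => ∃ c', π c' (ρ c q.1) = π c' (ρ c q.2))) ∪
          univ.biUnion fun c' => (univ \ proj π I c').biUnion fun x =>
            closedBy π I ρ S c c' x) := by
          refine Finset.card_le_card fun q hq => ?_
          simp only [openOrdered, closedBy, mem_union, mem_filter, mem_biUnion, mem_univ,
            mem_sdiff, true_and]
          by_cases h1 : ∃ c', π c' (ρ c q.1) = π c' (ρ c q.2)
          · exact Or.inl (Or.inr ⟨hq, h1⟩)
          · push Not at h1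
            by_cases h2 : ∃ c', ∃ x, x ∉ proj π I c' ∧
                BAdj S c' (π c' (ρ c q.1)) x ∧ BAdj S c' (π c' (ρ c q.2)) x
            · obtain ⟨c', x, hx, h⟩ := h2
              exact Or.inr ⟨c', x, hx, hq, h1 c', h⟩
            · exact Or.inl (Or.inl ⟨hq, h1, h2⟩)
      _ ≤ _ := by
          refine (Finset.card_union_le _ _).trans (add_le_add ?_ ?_)
          · exact (Finset.card_union_le _ _).trans
              (add_le_add le_rfl (card_coincident_le hρ c hF))
          · exact Finset.card_biUnion_le.trans
              (Finset.sum_le_sum fun c' _ => Finset.card_biUnion_le)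
  refine (Finset.sum_le_sum fun c _ => key c).trans ?_
  rw [Finset.sum_add_distrib, Finset.sum_add_distrib]
  refine add_le_add (add_le_add (sum_card_openOrdered_le π I ρ S) (by simp)) ?_
  rw [Finset.sum_comm]
  refine Finset.sum_le_sum fun c' _ => ?_
  rw [Finset.sum_comm]
  exact Finset.sum_le_sum fun x _ => sum_card_closedBy_le hρ S c' x

end Construction

section Bonferroni

variable {ι α : Type*} [DecidableEq ι] [DecidableEq α]

/-- The second Bonferroni inequality with a uniform bound on the pairwise intersections. -/
theorem sum_card_le_card_biUnion_add (T : Finset ι) (B : ι → Finset α) {q : ℕ}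
    (hq : ∀ x ∈ T, ∀ y ∈ T, x ≠ y → #(B x ∩ B y) ≤ q) :
    ∑ x ∈ T, #(B x) ≤ #(T.biUnion B) + #T * #T * q := by
  induction T using Finset.induction_on with
  | empty => simp
  | insert a T ha ih =>
    have ih := ih fun x hx y hy => hq x (mem_insert_of_mem hx) y (mem_insert_of_mem hy)
    have h1 : #(B a ∩ T.biUnion B) ≤ #T * q := by
      rw [Finset.inter_biUnion]
      refine Finset.card_biUnion_le_card_mul _ _ _ fun y hy => ?_
      exact hq a (mem_insert_self _ _) y (mem_insert_of_mem hy) (by rintro rfl; exact ha hy)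
    have h2 := Finset.card_union_add_card_inter (B a) (T.biUnion B)
    rw [Finset.sum_insert ha, Finset.biUnion_insert, Finset.card_insert_of_notMem ha]
    nlinarith

end Bonferroni

section BigCentres

variable {V M : Type*} [Fintype V] [DecidableEq V] [Fintype M] [DecidableEq M]

/-- Every vertex of a base graph sees at most `D` vertices of the pulled back graph. -/
def DegreeLE (π : Bool → V → M) (D : ℝ) (S : Finset (Bool × Sym2 M)) : Prop :=
  ∀ c x, (#(univ.filter fun v => BAdj S c x (π c v)) : ℝ) ≤ D

/-- Distinct vertices of a base graph have at most `q` common neighbours. -/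
def CodegreeLE (q : ℕ) (S : Finset (Bool × Sym2 M)) : Prop :=
  ∀ c x y, x ≠ y → #(nbr S c univ x ∩ nbr S c univ y) ≤ q

/-- The exponential cost that is charged to a vertex with neighbourhood `N`. -/
noncomputable def cost (p W D : ℝ) (w : M → ℕ) (N : Finset M) : ℝ :=
  if ((∑ y ∈ N, w y : ℕ) : ℝ) ≤ W then p / 2 * pairWeight w N else p * D * #N

theorem pairWeight_le (w : M → ℕ) (N : Finset M) :
    pairWeight w N ≤ #N ^ 2 + (∑ y ∈ N, w y) ^ 2 := by
  rw [pairWeight, Finset.sum_add_distrib]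
  refine add_le_add ?_ ?_
  · simp only [sum_const, smul_eq_mul, mul_one, offDiag_card]
    rw [sq]; exact Nat.sub_le _ _
  · rw [sq, Finset.sum_mul_sum, ← Finset.sum_product']
    refine Finset.sum_le_sum_of_subset ?_
    intro q hq
    simp only [mem_offDiag] at hq
    simp [hq.1, hq.2.1]

variable {π : Bool → V → M} {I : Finset V} {ρ : Bool → M → V}

theorem sum_wt (N : Finset M) (c : Bool) :
    ∑ y ∈ N, wt π I c y = #(I.filter fun u => π c u ∈ N) := by
  rw [Finset.card_eq_sum_card_fiberwise (f := π c) (t := N)]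
  · refine Finset.sum_congr rfl fun y hy => ?_
    rw [wt, Finset.filter_filter]
    congr 1
    ext u
    simp only [mem_filter]
    refine and_congr_right fun _ => ⟨fun h => ⟨h ▸ hy, h⟩, fun h => h.2⟩
  · intro u hu
    simpa using (Finset.mem_filter.1 hu).2

/-- The elements of `I` that are adjacent to `x` in colour `c`. -/
def above (π : Bool → V → M) (I : Finset V) (S : Finset (Bool × Sym2 M)) (c : Bool) (x : M) :
    Finset V := I.filter fun u => π c u ∈ nbr S c (proj π I c) x

theorem card_above_inter_le {F q : ℕ} (hF : ∀ c y, wt π I c y ≤ F) {S : Finset (Bool × Sym2 M)}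
    (hq : CodegreeLE q S) (c : Bool) {x y : M} (hxy : x ≠ y) :
    #(above π I S c x ∩ above π I S c y) ≤ q * F := by
  have h1 : above π I S c x ∩ above π I S c y ⊆
      I.filter fun u => π c u ∈ nbr S c univ x ∩ nbr S c univ y := by
    intro u hu
    simp only [above, mem_inter, mem_filter, mem_nbr] at hu
    simp only [mem_inter, mem_filter, mem_nbr, mem_univ, true_and]
    exact ⟨hu.1.1, hu.1.2.2, hu.2.2.2⟩
  refine (Finset.card_le_card h1).trans ?_
  rw [← sum_wt]
  refine (Finset.sum_le_card_nsmul _ _ _ fun y _ => hF c y).trans ?_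
  rw [smul_eq_mul]
  exact Nat.mul_le_mul_right _ (hq c x y hxy)

theorem card_big_lt {F q s : ℕ} {W : ℝ} (hF : ∀ c y, wt π I c y ≤ F)
    {S : Finset (Bool × Sym2 M)} (hq : CodegreeLE q S) (c : Bool)
    (hs : (#I : ℝ) + s * s * (q * F) < s * W) (T : Finset M)
    (hT : ∀ x ∈ T, W < #(above π I S c x)) : #T < s := by
  by_contra! h
  obtain ⟨T', hT', rfl⟩ := Finset.exists_subset_card_eq h
  have h1 := sum_card_le_card_biUnion_add T' (above π I S c) (q := q * F)
    fun x _ y _ hxy => card_above_inter_le hF hq c hxy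
  have h2 : #(T'.biUnion (above π I S c)) ≤ #I :=
    Finset.card_le_card (Finset.biUnion_subset.2 fun x _ => Finset.filter_subset _ _)
  have h3 : (#T' : ℝ) * W ≤ ∑ x ∈ T', (#(above π I S c x) : ℝ) := by
    rw [← nsmul_eq_mul]
    exact Finset.card_nsmul_le_sum _ _ _ fun x hx => (hT x (hT' hx)).le
  have h4 : (∑ x ∈ T', #(above π I S c x) : ℝ) ≤ #I + #T' * #T' * (q * F) := by
    exact_mod_cast h1.trans (Nat.add_le_add_right h2 _)
  linarith

theorem card_nbr_add_card_above_le (hρ : IsSection π I ρ) (S : Finset (Bool × Sym2 M)) (c : Bool)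
    (x : M) :
    #(above π I S c x) = #(nbr S c (proj π I c) x) +
      #(above π I S c x ∩ (I \ (proj π I c).image (ρ c))) := by
  have h1 : (nbr S c (proj π I c) x).image (ρ c) =
      above π I S c x ∩ (proj π I c).image (ρ c) := by
    ext u
    simp only [mem_image, mem_inter, above, mem_filter]
    constructor
    · rintro ⟨y, hy, rfl⟩
      have hyA := (mem_nbr.1 hy).1
      exact ⟨⟨(hρ c y hyA).1, by rwa [(hρ c y hyA).2]⟩, y, hyA, rfl⟩
    · rintro ⟨⟨h1, h2⟩, y, hy, rfl⟩
      rw [(hρ c y hy).2] at h2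
      exact ⟨y, h2, rfl⟩
  have h2 : #((nbr S c (proj π I c) x).image (ρ c)) = #(nbr S c (proj π I c) x) :=
    Finset.card_image_of_injOn ((isSection_injOn hρ c).mono (by
      intro y hy; exact (mem_nbr.1 hy).1))
  rw [← h2, h1]
  have h3 : above π I S c x ∩ (I \ (proj π I c).image (ρ c)) =
      above π I S c x \ (proj π I c).image (ρ c) := by
    rw [← Finset.inter_sdiff_assoc, (Finset.inter_eq_left.2 (Finset.filter_subset _ _) :
      above π I S c x ∩ I = above π I S c x)]
  rw [h3, Finset.card_inter_add_card_sdiff]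

theorem card_sdiff_image_section (hρ : IsSection π I ρ) (c : Bool) :
    #(I \ (proj π I c).image (ρ c)) + #(proj π I c) = #I := by
  have hsub : (proj π I c).image (ρ c) ⊆ I := by
    intro u hu
    obtain ⟨y, hy, rfl⟩ := Finset.mem_image.1 hu
    exact (hρ c y hy).1
  have := Finset.card_sdiff_add_card_eq_card hsub
  rwa [Finset.card_image_of_injOn (isSection_injOn hρ c)] at this

theorem sum_pairWeight_le (hρ : IsSection π I ρ) {F q s : ℕ} {p W D : ℝ} (hp : 0 ≤ p) (hDnn : 0 ≤ D)
    (hF : ∀ c y, wt π I c y ≤ F) {S : Finset (Bool × Sym2 M)} (hq : CodegreeLE q S)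
    (hD : DegreeLE π D S) (hs : (#I : ℝ) + s * s * (q * F) < s * W) (c : Bool) :
    ∑ x ∈ univ \ proj π I c, p / 2 * pairWeight (wt π I c) (nbr S c (proj π I c) x) ≤
      ∑ x ∈ univ \ proj π I c, cost p W D (wt π I c) (nbr S c (proj π I c) x) +
        p * D / 2 * ((#I : ℝ) - #(proj π I c) + s * s * (q * F)) := by
  set A := proj π I c with hA
  set I' := I \ A.image (ρ c) with hI'
  set T := (univ \ A).filter fun x => W < #(above π I S c x) with hT
  have hD0 : ∀ x : M, (#(above π I S c x) : ℝ) ≤ D := by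
    intro x
    refine le_trans ?_ (hD c x)
    norm_cast
    refine Finset.card_le_card fun u hu => ?_
    simp only [above, mem_filter, mem_nbr] at hu
    simp [hu.2.2]
  have hw : ∀ x, ∑ y ∈ nbr S c A x, wt π I c y = #(above π I S c x) := fun x => sum_wt _ _
  have hpt : ∀ x ∈ univ \ A, p / 2 * pairWeight (wt π I c) (nbr S c A x) ≤
      cost p W D (wt π I c) (nbr S c A x) +
        p * D / 2 * (if W < #(above π I S c x) then (#(above π I S c x ∩ I') : ℝ) else 0) := by
    intro x _
    rw [cost, hw]
    by_cases hx : (#(above π I S c x) : ℝ) ≤ W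
    · rw [if_pos hx, if_neg (not_lt.2 hx)]; simp
    · rw [if_neg hx, if_pos (not_le.1 hx)]
      have h1 := pairWeight_le (wt π I c) (nbr S c A x)
      rw [hw] at h1
      have h2 := card_nbr_add_card_above_le hρ S c x
      rw [← hA, ← hI'] at h2
      have h3 := hD0 x
      have h1' : (pairWeight (wt π I c) (nbr S c A x) : ℝ) ≤
        (#(nbr S c A x) : ℝ) ^ 2 + (#(above π I S c x) : ℝ) ^ 2 := by exact_mod_cast h1
      have h2' : (#(above π I S c x) : ℝ) = #(nbr S c A x) + #(above π I S c x ∩ I') := by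
        exact_mod_cast h2
      have d0 : (0 : ℝ) ≤ #(nbr S c A x) := by positivity
      have e0 : (0 : ℝ) ≤ #(above π I S c x ∩ I') := by positivity
      generalize (#(nbr S c A x) : ℝ) = d at *
      generalize (#(above π I S c x ∩ I') : ℝ) = e at *
      generalize (#(above π I S c x) : ℝ) = w at *
      have h4 : (pairWeight (wt π I c) (nbr S c A x) : ℝ) ≤ 2 * D * d + D * e := by
        subst h2'
        nlinarith
      calc _ ≤ p / 2 * (2 * D * d + D * e) := by gcongr
        _ = _ := by ring
  refine (Finset.sum_le_sum hpt).trans ?_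
  rw [Finset.sum_add_distrib, ← Finset.mul_sum]
  gcongr
  rw [← Finset.sum_filter, ← hT]
  have hTs : #T < s := card_big_lt hF hq c hs T fun x hx => (Finset.mem_filter.1 hx).2
  have h1 := sum_card_le_card_biUnion_add T (fun x => above π I S c x ∩ I') (q := q * F)
    fun x _ y _ hxy => (Finset.card_le_card (by
      intro u hu; simp only [mem_inter] at hu ⊢; exact ⟨hu.1.1, hu.2.1⟩)).trans
      (card_above_inter_le hF hq c hxy)
  have h2 : #(T.biUnion fun x => above π I S c x ∩ I') ≤ #I' :=
    Finset.card_le_card (Finset.biUnion_subset.2 fun x _ => Finset.inter_subset_right)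
  have h3 := card_sdiff_image_section hρ c
  rw [← hA, ← hI'] at h3
  have h3' : (#I' : ℝ) = #I - #A := by rw [← h3]; push_cast; ring
  have h4 : #T * #T * (q * F) ≤ s * s * (q * F) := by gcongr
  rw [← h3']
  exact_mod_cast h1.trans (add_le_add h2 h4)

/-- The pairs of colour `c` between `x` and `A`. -/
def star (c : Bool) (A : Finset M) (x : M) : Finset (Bool × Sym2 M) := A.image fun y => (c, s(x, y))

/-- The colours and vertices that do not belong to the projections of `I`. -/
def outerIdx (π : Bool → V → M) (I : Finset V) : Finset (Bool × M) :=
  univ.filter fun i => i.2 ∉ proj π I i.1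

/-- The pairs that leave the projections of `I`. -/
def outerPairs (π : Bool → V → M) (I : Finset V) : Finset (Bool × Sym2 M) :=
  (outerIdx π I).biUnion fun i => star i.1 (proj π I i.1) i.2

theorem star_disjoint : ((outerIdx π I : Finset (Bool × M)) : Set (Bool × M)).PairwiseDisjoint
    fun i => star i.1 (proj π I i.1) i.2 := by
  rintro ⟨c, x⟩ hx ⟨c', x'⟩ hx' hne
  rw [Function.onFun, Finset.disjoint_left]
  rintro e he he'
  simp only [star, mem_image] at he he'
  obtain ⟨y, hy, rfl⟩ := he
  obtain ⟨y', hy', h⟩ := he'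
  simp only [Prod.mk.injEq, Sym2.eq_iff] at h
  obtain ⟨rfl, ⟨rfl, rfl⟩ | ⟨rfl, rfl⟩⟩ := h
  · exact hne rfl
  · simp only [outerIdx, coe_filter, mem_univ, true_and, Set.mem_ofPred_eq] at hx'
    exact hx' hy

theorem badj_inter_outer {S : Finset (Bool × Sym2 M)} {c : Bool} {x y : M}
    (hx : x ∉ proj π I c) (hy : y ∈ proj π I c) :
    BAdj (S ∩ outerPairs π I) c x y ↔ BAdj S c x y := by
  have : (c, s(x, y)) ∈ outerPairs π I := by
    simp only [outerPairs, mem_biUnion]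
    exact ⟨(c, x), by simpa [outerIdx] using hx, Finset.mem_image_of_mem _ hy⟩
  simp [BAdj, this]

theorem nbr_inter_outer (S : Finset (Bool × Sym2 M)) {c : Bool} {x : M}
    (hx : x ∉ proj π I c) :
    nbr (S ∩ outerPairs π I) c (proj π I c) x = nbr S c (proj π I c) x :=
  Finset.filter_congr fun _ hy => badj_inter_outer hx hy

theorem nbr_inter_star (S : Finset (Bool × Sym2 M)) (c : Bool) (A : Finset M) (x : M) :
    nbr (S ∩ star c A x) c A x = nbr S c A x := by
  refine Finset.filter_congr fun y hy => ?_
  have : (c, s(x, y)) ∈ star c A x := Finset.mem_image_of_mem _ hy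
  simp [BAdj, this]

theorem nbr_image_star {c : Bool} {A N : Finset M} {x : M} (hx : x ∉ A) (hN : N ⊆ A) :
    nbr (N.image fun y => (c, s(x, y))) c A x = N := by
  ext y
  simp only [mem_nbr, BAdj, mem_image, Prod.mk.injEq, true_and]
  constructor
  · rintro ⟨hy, hxy, z, hz, h⟩
    rcases Sym2.eq_iff.1 h with ⟨-, rfl⟩ | ⟨rfl, rfl⟩
    · exact hz
    · exact absurd hy hx
  · intro hy
    exact ⟨hN hy, by rintro rfl; exact hx (hN hy), y, hy, rfl⟩

theorem openOrdered_inter_outer (hρ : IsSection π I ρ) (S : Finset (Bool × Sym2 M)) (c : Bool) :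
    openOrdered π I ρ (S ∩ outerPairs π I) c = openOrdered π I ρ S c := by
  refine Finset.filter_congr fun q hq => ?_
  rw [mem_offDiag] at hq
  have h : ∀ c' x, x ∉ proj π I c' → ∀ y ∈ proj π I c,
      (BAdj (S ∩ outerPairs π I) c' (π c' (ρ c y)) x ↔ BAdj S c' (π c' (ρ c y)) x) := by
    intro c' x hx y hy
    have := badj_inter_outer (S := S) hx (pi_mem_proj (π := π) (hρ c y hy).1 c')
    exact ⟨fun h => (this.1 h.symm).symm, fun h => (this.2 h.symm).symm⟩
  refine and_congr_right fun _ => not_congr (exists_congr fun c' => exists_congr fun x =>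
    and_congr_right fun hx => ?_)
  rw [h c' x hx _ hq.1, h c' x hx _ hq.2.1]

theorem openPairs_inter_outer (hρ : IsSection π I ρ) (S : Finset (Bool × Sym2 M)) :
    openPairs π I ρ (S ∩ outerPairs π I) = openPairs π I ρ S := by
  simp only [openPairs, openOrdered_inter_outer hρ]

theorem openPairs_disjoint_outer (S : Finset (Bool × Sym2 M)) :
    Disjoint (openPairs π I ρ S) (outerPairs π I) := by
  rw [Finset.disjoint_left]
  rintro e he he'
  simp only [openPairs, openOrdered, mem_biUnion, mem_image, mem_filter, mem_offDiag,
    mem_univ, true_and] at he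
  obtain ⟨c, ⟨y, y'⟩, ⟨⟨hy, hy', -⟩, -⟩, rfl⟩ := he
  simp only [outerPairs, outerIdx, star, mem_biUnion, mem_filter, mem_univ, true_and, mem_image,
    toPair, Prod.mk.injEq, Sym2.eq_iff] at he'
  obtain ⟨⟨c', x⟩, hx, z, hz, rfl, ⟨rfl, rfl⟩ | ⟨rfl, rfl⟩⟩ := he'
  · exact hx hy
  · exact hx hy'

theorem subsetExp_star {p : ℝ} {c : Bool} {A : Finset M} {x : M} (hx : x ∉ A)
    (f : Finset M → ℝ) :
    subsetExp p (star c A x) (fun S => f (nbr S c A x)) = subsetExp p A f := by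
  rw [star, subsetExp_image]
  · exact subsetExp_congr fun N hN => by rw [nbr_image_star hx hN]
  · intro y _ y' _ h
    have h : y = y' ∨ x = y' ∧ y = x := by simpa [Sym2.eq_iff] using h
    rcases h with h | ⟨h1, h2⟩
    · exact h
    · exact h2.trans h1

theorem sum_outerIdx (f : Bool → M → ℝ) :
    ∑ i ∈ outerIdx π I, f i.1 i.2 = ∑ c, ∑ x ∈ univ \ proj π I c, f c x := by
  rw [Finset.sum_sigma']
  refine Finset.sum_bij' (fun i _ => ⟨i.1, i.2⟩) (fun i _ => (i.1, i.2)) ?_ ?_ ?_ ?_ ?_ <;>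
    simp [outerIdx]

end BigCentres

section MainEvent

variable {V M : Type*} [Fintype V] [DecidableEq V] [Fintype M] [DecidableEq M]
variable {π : Bool → V → M} {I : Finset V} {ρ : Bool → M → V}

/-- The number of closed pairs is controlled by the cost of the outer neighbourhoods, up to `R`. -/
def CostBound (π : Bool → V → M) (I : Finset V) (p W D R : ℝ) (S : Finset (Bool × Sym2 M)) :
    Prop :=
  ∑ c, ∑ x ∈ univ \ proj π I c, p / 2 * pairWeight (wt π I c) (nbr S c (proj π I c) x) ≤
    ∑ c, ∑ x ∈ univ \ proj π I c, cost p W D (wt π I c) (nbr S c (proj π I c) x) + R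

theorem costBound_inter_outer {p W D R : ℝ} (S : Finset (Bool × Sym2 M)) :
    CostBound π I p W D R (S ∩ outerPairs π I) ↔ CostBound π I p W D R S := by
  unfold CostBound
  have h : ∀ f : Bool → Finset M → ℝ,
      ∑ c, ∑ x ∈ univ \ proj π I c, f c (nbr (S ∩ outerPairs π I) c (proj π I c) x) =
      ∑ c, ∑ x ∈ univ \ proj π I c, f c (nbr S c (proj π I c) x) := by
    intro f
    refine Finset.sum_congr rfl fun c _ => Finset.sum_congr rfl fun x hx => ?_
    rw [nbr_inter_outer S (by simpa using hx)]
  rw [h fun c N => p / 2 * pairWeight (wt π I c) N, h fun c N => cost p W D (wt π I c) N]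

theorem subsetProb_few_open_le (hρ : IsSection π I ρ) {p W D R z η : ℝ} {F t : ℕ} (hp0 : 0 ≤ p)
    (hp1 : p ≤ 1) (hz0 : 0 < z) (hz1 : z ≤ 1) (hF : ∀ c y, wt π I c y ≤ F) (hη : 0 ≤ η)
    (hmom : ∀ c, subsetExp p (proj π I c) (fun N => Real.exp (cost p W D (wt π I c) N)) ≤ 1 + η) :
    subsetProb p univ (fun S => CostBound π I p W D R S ∧ #(S ∩ openPairs π I ρ S) < t) ≤
      z⁻¹ ^ t * Real.exp (-(p * (1 - z) / 2) * (∑ c, (#(proj π I c).offDiag : ℝ)) +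
        p * #I * F + R + η * (2 * Fintype.card M)) := by
  classical
  set A := proj π I with hA
  set Eo := outerPairs π I with hEo
  have huniv : (univ : Finset (Bool × Sym2 M)) = Eo ∪ (univ \ Eo) := by
    rw [Finset.union_sdiff_of_subset (Finset.subset_univ _)]
  set Q : ℝ := ∑ c, (#(A c).offDiag : ℝ) with hQ
  set κ : ℝ := -(p * (1 - z) / 2) * Q + p * #I * F + R with hκ
  rw [subsetProb, huniv, subsetExp_union Finset.disjoint_sdiff]
  have step : ∀ S, S ⊆ Eo → subsetExp p (univ \ Eo) (fun T =>
      if CostBound π I p W D R (S ∪ T) ∧ #((S ∪ T) ∩ openPairs π I ρ (S ∪ T)) < t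
        then (1 : ℝ) else 0) ≤
      z⁻¹ ^ t * (Real.exp κ * ∏ i ∈ outerIdx π I,
        Real.exp (cost p W D (wt π I i.1) (nbr (S ∩ star i.1 (A i.1) i.2) i.1 (A i.1) i.2))) := by
    intro S hS
    have hST : ∀ T, T ⊆ univ \ Eo → (S ∪ T) ∩ Eo = S := by
      intro T hT
      rw [Finset.union_inter_distrib_right, Finset.inter_eq_left.2 hS,
        Finset.disjoint_iff_inter_eq_empty.1 (Finset.disjoint_sdiff.symm.mono_left hT),
        Finset.union_empty]
    by_cases hC : CostBound π I p W D R S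
    swap
    · have : ∀ T, T ⊆ univ \ Eo → (if CostBound π I p W D R (S ∪ T) ∧
          #((S ∪ T) ∩ openPairs π I ρ (S ∪ T)) < t then (1 : ℝ) else 0) = 0 := by
        intro T hT
        rw [if_neg]
        rintro ⟨h, -⟩
        rw [← costBound_inter_outer, ← hEo, hST T hT] at h
        exact hC h
      rw [subsetExp_congr this, subsetExp_const]
      positivity
    set O := openPairs π I ρ S with hO
    have h1 : subsetExp p (univ \ Eo) (fun T =>
        if CostBound π I p W D R (S ∪ T) ∧ #((S ∪ T) ∩ openPairs π I ρ (S ∪ T)) < t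
          then (1 : ℝ) else 0) ≤ subsetExp p (univ \ Eo) (fun T => z⁻¹ ^ t * z ^ #(T ∩ O)) := by
      refine subsetExp_mono hp0 hp1 fun T hT => ?_
      split_ifs with h
      · have h2 := h.2
        rw [← openPairs_inter_outer hρ (S ∪ T), ← hEo, hST T hT, ← hO] at h2
        have h3 : #(T ∩ O) ≤ t := (Finset.card_le_card
          (Finset.inter_subset_inter_right Finset.subset_union_right)).trans h2.le
        rw [inv_pow, inv_mul_eq_div, one_le_div (by positivity)]
        exact pow_le_pow_of_le_one hz0.le hz1 h3
      · positivity
    refine h1.trans ?_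
    rw [subsetExp_mul_left, subsetExp_pow_card_inter, ← Real.exp_sum, ← Real.exp_add]
    refine mul_le_mul_of_nonneg_left ?_ (by positivity)
    have hOd : (univ \ Eo) ∩ O = O := by
      refine Finset.inter_eq_right.2 fun e he => ?_
      exact Finset.mem_sdiff.2 ⟨Finset.mem_univ _,
        Finset.disjoint_left.1 (openPairs_disjoint_outer S) he⟩
    rw [hOd]
    have hbase : 1 - p + p * z ≤ Real.exp (-(p * (1 - z))) := by
      have := Real.add_one_le_exp (-(p * (1 - z)))
      linarith
    have hb0 : 0 ≤ 1 - p + p * z := by nlinarith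
    refine (pow_le_pow_left₀ hb0 hbase _).trans ?_
    rw [← Real.exp_nat_mul]
    refine Real.exp_le_exp.2 ?_
    have hsum : ∑ i ∈ outerIdx π I,
        cost p W D (wt π I i.1) (nbr (S ∩ star i.1 (A i.1) i.2) i.1 (A i.1) i.2) =
        ∑ c, ∑ x ∈ univ \ A c, cost p W D (wt π I c) (nbr S c (A c) x) := by
      simp only [nbr_inter_star]
      exact sum_outerIdx fun c x => cost p W D (wt π I c) (nbr S c (A c) x)
    rw [hsum]
    have hcount : Q ≤ 2 * #O + 2 * (#I * F) +
        ∑ c, ∑ x ∈ univ \ A c, (pairWeight (wt π I c) (nbr S c (A c) x) : ℝ) := by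
      rw [hQ]
      exact_mod_cast sum_card_offDiag_le hρ hF S
    have hC' := hC
    unfold CostBound at hC'
    simp only [← Finset.mul_sum] at hC'
    rw [← hA] at hC'
    set P : ℝ := ∑ c, ∑ x ∈ univ \ A c, (pairWeight (wt π I c) (nbr S c (A c) x) : ℝ) with hP
    have hP0 : 0 ≤ P :=
      Finset.sum_nonneg fun _ _ => Finset.sum_nonneg fun _ _ => Nat.cast_nonneg _
    have hIF : (0 : ℝ) ≤ #I * F := mul_nonneg (Nat.cast_nonneg _) (Nat.cast_nonneg _)
    rw [hκ]
    have e1 : p * (1 - z) * (Q / 2) ≤ p * (1 - z) * (#O + #I * F + P / 2) := by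
      refine mul_le_mul_of_nonneg_left (by linarith) ?_
      exact mul_nonneg hp0 (by linarith)
    have e2 : p * (1 - z) * (#I * F + P / 2) ≤ p * (#I * F + P / 2) := by
      refine mul_le_mul_of_nonneg_right ?_ (by linarith)
      nlinarith
    nlinarith
  refine le_trans (le_of_eq (by congr!)) ((subsetExp_mono hp0 hp1 step).trans ?_)
  rw [subsetExp_mul_left, subsetExp_mul_left, Real.exp_add κ]
  refine mul_le_mul_of_nonneg_left (mul_le_mul_of_nonneg_left ?_ (Real.exp_pos _).le)
    (pow_nonneg (inv_nonneg.2 hz0.le) _)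
  rw [hEo, outerPairs, subsetExp_biUnion_prod _ _ star_disjoint
    (fun i T => Real.exp (cost p W D (wt π I i.1) (nbr T i.1 (A i.1) i.2)))]
  calc _ ≤ ∏ i ∈ outerIdx π I, (1 + η) := by
        refine Finset.prod_le_prod (fun i _ => ?_) fun i hi => ?_
        · exact subsetExp_nonneg hp0 hp1 fun _ _ => (Real.exp_pos _).le
        · have hi' : i.2 ∉ A i.1 := (Finset.mem_filter.1 hi).2
          rw [subsetExp_star hi' fun N => Real.exp (cost p W D (wt π I i.1) N)]
          exact hmom i.1
    _ ≤ Real.exp η ^ #(outerIdx π I) := by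
        rw [Finset.prod_const]
        refine pow_le_pow_left₀ (by linarith) ?_ _
        have := Real.add_one_le_exp η
        linarith
    _ = Real.exp (η * #(outerIdx π I)) := by rw [← Real.exp_nat_mul]; ring_nf
    _ ≤ _ := by
        refine Real.exp_le_exp.2 (mul_le_mul_of_nonneg_left ?_ hη)
        have : #(outerIdx π I) ≤ 2 * Fintype.card M := by
          refine (Finset.card_le_univ _).trans ?_
          simp
        exact_mod_cast this

end MainEvent

section Containment

variable {α : Type*} [DecidableEq α] {p : ℝ}

theorem subsetExp_subset_indicator {E T : Finset α} (hT : T ⊆ E) :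
    subsetExp p E (fun S => if T ⊆ S then 1 else 0) = p ^ #T := by
  have hE : E = T ∪ (E \ T) := (Finset.union_sdiff_of_subset hT).symm
  rw [hE, subsetExp_union Finset.disjoint_sdiff]
  have : ∀ S, S ⊆ T → subsetExp p (E \ T) (fun U => if T ⊆ S ∪ U then (1 : ℝ) else 0) =
      if S = T then 1 else 0 := by
    intro S hS
    rw [← subsetExp_const p (E \ T) (if S = T then (1 : ℝ) else 0)]
    refine subsetExp_congr fun U hU => ?_
    congr 1
    refine propext ⟨fun h => subset_antisymm hS fun x hx => ?_, fun h => ?_⟩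
    · rcases Finset.mem_union.1 (h hx) with h | h
      · exact h
      · exact absurd hx (Finset.mem_sdiff.1 (hU h)).2
    · rw [h]; exact Finset.subset_union_left
  rw [subsetExp_congr this, subsetExp]
  rw [Finset.sum_eq_single T]
  · simp
  · intro S _ hS; simp [hS]
  · intro h; simp at h

end Containment

section Moment

variable {M : Type*} [Fintype M] [DecidableEq M] {p : ℝ}

theorem subsetExp_pow_card_le {A : Finset M} {k t : ℝ} (hp0 : 0 ≤ p) (hp1 : p ≤ 1) (ht : 0 ≤ t)
    (hA : (#A : ℝ) ≤ k) : subsetExp p A (fun N => t ^ #N) ≤ Real.exp (p * t * k) := by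
  have : subsetExp p A (fun N => t ^ #N) = subsetExp p A (fun N => t ^ #(N ∩ A)) :=
    subsetExp_congr fun N hN => by rw [Finset.inter_eq_left.2 hN]
  rw [this, subsetExp_pow_card_inter, Finset.inter_self]
  exact one_sub_add_mul_pow_le hp0 hp1 ht hA

theorem subsetExp_pairWeight_le {A : Finset M} {w : M → ℕ} {k : ℝ} 
    (hA : (#A : ℝ) ≤ k) (hw : ((∑ y ∈ A, w y : ℕ) : ℝ) ≤ k) :
    subsetExp p A (fun N => (pairWeight w N : ℝ)) ≤ p ^ 2 * (2 * k ^ 2) := by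
  have h1 : ∀ N, N ⊆ A → (pairWeight w N : ℝ) =
      ∑ q ∈ A.offDiag, ((1 + w q.1 * w q.2 : ℕ) : ℝ) * if ({q.1, q.2} : Finset M) ⊆ N then 1 else 0 := by
    intro N hN
    rw [pairWeight, Nat.cast_sum]
    simp only [mul_ite, mul_one, mul_zero]
    rw [← Finset.sum_filter]
    refine Finset.sum_congr ?_ fun _ _ => rfl
    ext q
    simp only [mem_offDiag, mem_filter, insert_subset_iff, singleton_subset_iff]
    refine ⟨fun h => ⟨⟨hN h.1, hN h.2.1, h.2.2⟩, h.1, h.2.1⟩, fun h => ⟨h.2.1, h.2.2, h.1.2.2⟩⟩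
  rw [subsetExp_congr h1, subsetExp_sum]
  have h2 : ∀ q ∈ A.offDiag, subsetExp p A (fun N => ((1 + w q.1 * w q.2 : ℕ) : ℝ) *
      if ({q.1, q.2} : Finset M) ⊆ N then 1 else 0) = p ^ 2 * ((1 + w q.1 * w q.2 : ℕ) : ℝ) := by
    intro q hq
    rw [mem_offDiag] at hq
    rw [subsetExp_mul_left, subsetExp_subset_indicator, Finset.card_pair hq.2.2, mul_comm]
    simp [insert_subset_iff, hq.1, hq.2.1]
  rw [Finset.sum_congr rfl h2, ← Finset.mul_sum, ← Nat.cast_sum]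
  refine mul_le_mul_of_nonneg_left ?_ (sq_nonneg p)
  have h3 : (pairWeight w A : ℝ) ≤ (#A : ℝ) ^ 2 + ((∑ y ∈ A, w y : ℕ) : ℝ) ^ 2 := by
    exact_mod_cast pairWeight_le w A
  have h4 : (#A : ℝ) ^ 2 ≤ k ^ 2 := pow_le_pow_left₀ (by positivity) hA 2
  have h5 : ((∑ y ∈ A, w y : ℕ) : ℝ) ^ 2 ≤ k ^ 2 := pow_le_pow_left₀ (Nat.cast_nonneg _) hw 2
  change (pairWeight w A : ℝ) ≤ _
  linarith

theorem exp_cost_le {A N : Finset M} {w : M → ℕ} {W D d : ℝ} {F : ℕ} (hp0 : 0 ≤ p) (hF : 0 < F)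
    (hw : ∀ y ∈ A, 1 ≤ w y ∧ w y ≤ F) (hd : p * (F * d) ^ 2 ≤ 1) (hN : N ⊆ A) :
    Real.exp (cost p W D w N) ≤ 1 + p * pairWeight w N +
      Real.exp (p * W ^ 2 - d) * Real.exp 1 ^ #N +
      Real.exp (-(W / F)) * Real.exp (p * D + 1) ^ #N := by
  have hF' : (0 : ℝ) < F := by exact_mod_cast hF
  have h1 : #N ≤ ∑ y ∈ N, w y := by
    rw [Finset.card_eq_sum_ones]
    exact Finset.sum_le_sum fun y hy => (hw y (hN hy)).1
  have h2 : ∑ y ∈ N, w y ≤ #N * F := by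
    rw [← smul_eq_mul]
    exact Finset.sum_le_card_nsmul _ _ _ fun y hy => (hw y (hN hy)).2
  have h3 := pairWeight_le w N
  have h1' : (#N : ℝ) ≤ ((∑ y ∈ N, w y : ℕ) : ℝ) := by exact_mod_cast h1
  have h2' : ((∑ y ∈ N, w y : ℕ) : ℝ) ≤ #N * F := by exact_mod_cast h2
  have h3' : (pairWeight w N : ℝ) ≤ (#N : ℝ) ^ 2 + ((∑ y ∈ N, w y : ℕ) : ℝ) ^ 2 := by
    exact_mod_cast h3
  have hN0 : (0 : ℝ) ≤ #N := Nat.cast_nonneg _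
  have hP0 : (0 : ℝ) ≤ pairWeight w N := Nat.cast_nonneg _
  have e1 : 0 ≤ Real.exp (p * W ^ 2 - d) * Real.exp 1 ^ #N := by positivity
  have e2 : 0 ≤ Real.exp (-(W / F)) * Real.exp (p * D + 1) ^ #N := by positivity
  have e3 : 0 ≤ p * pairWeight w N := mul_nonneg hp0 hP0
  unfold cost
  split_ifs with hW
  · by_cases hNd : (#N : ℝ) ≤ d
    · have h4 : ((∑ y ∈ N, w y : ℕ) : ℝ) ^ 2 ≤ (F * d) ^ 2 := by
        refine pow_le_pow_left₀ (Nat.cast_nonneg _) ?_ 2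
        nlinarith
      have h5 : (#N : ℝ) ^ 2 ≤ ((∑ y ∈ N, w y : ℕ) : ℝ) ^ 2 := pow_le_pow_left₀ hN0 h1' 2
      have h6 : p / 2 * pairWeight w N ≤ 1 := by
        calc p / 2 * pairWeight w N ≤ p / 2 * (2 * (F * d) ^ 2) := by
              refine mul_le_mul_of_nonneg_left (by linarith) (by positivity)
          _ ≤ 1 := by linarith
      have h7 : Real.exp (p / 2 * pairWeight w N) ≤ 1 + p * pairWeight w N := by
        have h0 : 0 ≤ p / 2 * pairWeight w N := by positivity
        have := Real.abs_exp_sub_one_sub_id_le (x := p / 2 * pairWeight w N)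
          (by rw [abs_of_nonneg h0]; exact h6)
        have := (abs_le.1 this).2
        nlinarith
      linarith
    · have h4 : Real.exp (p / 2 * pairWeight w N) ≤ Real.exp (p * W ^ 2 - d) * Real.exp 1 ^ #N := by
        rw [← Real.exp_nat_mul, ← Real.exp_add]
        refine Real.exp_le_exp.2 ?_
        have h5 : ((∑ y ∈ N, w y : ℕ) : ℝ) ^ 2 ≤ W ^ 2 := pow_le_pow_left₀ (Nat.cast_nonneg _) hW 2
        have h6 : (#N : ℝ) ^ 2 ≤ ((∑ y ∈ N, w y : ℕ) : ℝ) ^ 2 := pow_le_pow_left₀ hN0 h1' 2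
        have : p / 2 * pairWeight w N ≤ p / 2 * (2 * W ^ 2) := by
          refine mul_le_mul_of_nonneg_left (by linarith) (by positivity)
        linarith
      linarith
  · have h4 : Real.exp (p * D * #N) ≤ Real.exp (-(W / F)) * Real.exp (p * D + 1) ^ #N := by
      rw [← Real.exp_nat_mul, ← Real.exp_add]
      refine Real.exp_le_exp.2 ?_
      have : W / F ≤ #N := by
        rw [div_le_iff₀ hF']; linarith
      nlinarith
    linarith

theorem subsetExp_exp_cost_le {A : Finset M} {w : M → ℕ} {W D d k : ℝ} {F : ℕ} (hp0 : 0 ≤ p)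
    (hp1 : p ≤ 1) (hF : 0 < F) (hw : ∀ y ∈ A, 1 ≤ w y ∧ w y ≤ F)
    (hwk : ((∑ y ∈ A, w y : ℕ) : ℝ) ≤ k) (hd : p * (F * d) ^ 2 ≤ 1) :
    subsetExp p A (fun N => Real.exp (cost p W D w N)) ≤ 1 + (2 * p ^ 3 * k ^ 2 +
      Real.exp (p * W ^ 2 - d + p * Real.exp 1 * k) +
      Real.exp (p * Real.exp (p * D + 1) * k - W / F)) := by
  have hA : (#A : ℝ) ≤ k := by
    refine le_trans ?_ hwk
    norm_cast
    rw [Finset.card_eq_sum_ones]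
    exact Finset.sum_le_sum fun y hy => (hw y hy).1
  refine (subsetExp_mono hp0 hp1 fun N hN => exp_cost_le hp0 hF hw hd hN).trans ?_
  rw [subsetExp_add, subsetExp_add, subsetExp_add, subsetExp_const, subsetExp_mul_left,
    subsetExp_mul_left, subsetExp_mul_left]
  have h1 := mul_le_mul_of_nonneg_left (subsetExp_pairWeight_le (p := p) hA hwk) hp0
  have h2 := mul_le_mul_of_nonneg_left
    (subsetExp_pow_card_le hp0 hp1 (Real.exp_pos 1).le hA) (Real.exp_pos (p * W ^ 2 - d)).le
  have h3 := mul_le_mul_of_nonneg_left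
    (subsetExp_pow_card_le hp0 hp1 (Real.exp_pos (p * D + 1)).le hA) (Real.exp_pos (-(W / F))).le
  rw [← Real.exp_add] at h2 h3
  rw [neg_add_eq_sub] at h3
  nlinarith

end Moment

section Conclusion

variable {V M : Type*} [Fintype V] [DecidableEq V] [Fintype M] [DecidableEq M]
variable {π : Bool → V → M} {I : Finset V} {ρ : Bool → M → V}

theorem one_le_wt {c : Bool} {y : M} (hy : y ∈ proj π I c) : 1 ≤ wt π I c y := by
  obtain ⟨u, hu, rfl⟩ := Finset.mem_image.1 hy
  exact Finset.card_pos.2 ⟨u, by simp [hu]⟩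

theorem sum_wt_proj (c : Bool) : ∑ y ∈ proj π I c, wt π I c y = #I := by
  rw [sum_wt, Finset.filter_true_of_mem]
  exact fun u hu => pi_mem_proj hu c

/-- The bound for the probability that `I` spans few open edges while the base graphs satisfy the
degree conditions. -/
theorem subsetProb_good_few_open_le (hρ : IsSection π I ρ) {p W D d k z η : ℝ} {F q s t : ℕ}
    (hp0 : 0 ≤ p) (hp1 : p ≤ 1) (hz0 : 0 < z) (hz1 : z ≤ 1) (hD : 0 ≤ D) (hF0 : 0 < F)
    (hF : ∀ c y, wt π I c y ≤ F) (hIk : (#I : ℝ) ≤ k)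
    (hd : p * (F * d) ^ 2 ≤ 1) (hs : k + s * s * (q * F) < s * W)
    (hη : η = 2 * p ^ 3 * k ^ 2 + Real.exp (p * W ^ 2 - d + p * Real.exp 1 * k) +
      Real.exp (p * Real.exp (p * D + 1) * k - W / F)) :
    subsetProb p univ (fun S => DegreeLE π D S ∧ CodegreeLE q S ∧
      #(S ∩ openPairs π I ρ S) < t) ≤
      z⁻¹ ^ t * Real.exp (-(p * (1 - z) / 2) * (∑ c, (#(proj π I c).offDiag : ℝ)) +
        p * #I * F + ∑ c, p * D / 2 * ((#I : ℝ) - #(proj π I c) + s * s * (q * F)) +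
        η * (2 * Fintype.card M)) := by
  have hη0 : 0 ≤ η := by rw [hη]; positivity
  refine le_trans (subsetProb_mono hp0 hp1 fun S _ hS => ⟨?_, hS.2.2⟩)
    (subsetProb_few_open_le (W := W) (D := D) hρ hp0 hp1 hz0 hz1 hF hη0 fun c => ?_)
  · rw [hη]
    exact subsetExp_exp_cost_le hp0 hp1 hF0 (fun y hy => ⟨one_le_wt hy, hF c y⟩)
      (by rw [sum_wt_proj]; exact hIk) hd
  · unfold CostBound
    rw [← Finset.sum_add_distrib]
    exact Finset.sum_le_sum fun c _ => sum_pairWeight_le hρ hp0 hD hF hS.2.1 hS.1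
      (lt_of_le_of_lt (by linarith) hs) c

end Conclusion

section Marginal

variable {α : Type*} [DecidableEq α] {p : ℝ}

theorem subsetExp_inter_of_subset {E E₁ : Finset α} (h : E₁ ⊆ E) (f : Finset α → ℝ) :
    subsetExp p E (fun S => f (S ∩ E₁)) = subsetExp p E₁ f := by
  have hE : E = E₁ ∪ (E \ E₁) := (Finset.union_sdiff_of_subset h).symm
  rw [hE, subsetExp_union Finset.disjoint_sdiff]
  refine subsetExp_congr fun S hS => ?_
  rw [← subsetExp_const p (E \ E₁) (f S)]
  refine subsetExp_congr fun T hT => ?_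
  rw [Finset.union_inter_distrib_right, Finset.inter_eq_left.2 hS,
    Finset.disjoint_iff_inter_eq_empty.1 (Finset.disjoint_sdiff.symm.mono_left hT),
    Finset.union_empty]

theorem subsetProb_subset_eq {E T : Finset α} (hT : T ⊆ E) :
    subsetProb p E (fun S => T ⊆ S) = p ^ #T := by
  rw [← subsetExp_subset_indicator hT, subsetProb]
  congr!

theorem subsetProb_eq_zero {E : Finset α} {P : Finset α → Prop} (h : ∀ S, S ⊆ E → ¬ P S) :
    subsetProb p E P = 0 := by
  classical
  exact (subsetExp_congr fun S hS => if_neg (h S hS)).trans (subsetExp_const p E 0)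

end Marginal

section Degrees

variable {V M : Type*} [Fintype V] [DecidableEq V] [Fintype M] [DecidableEq M]
variable {π : Bool → V → M} {p : ℝ}

theorem subsetExp_exp_sum_le {A : Finset M} {w : M → ℕ} {lam n : ℝ} {F : ℕ} (hp0 : 0 ≤ p)
    (hp1 : p ≤ 1) (hl0 : 0 ≤ lam) (hl : lam * F ≤ 1) (hw : ∀ y ∈ A, w y ≤ F)
    (hn : ((∑ y ∈ A, w y : ℕ) : ℝ) ≤ n) :
    subsetExp p A (fun N => Real.exp (lam * ((∑ y ∈ N, w y : ℕ) : ℝ))) ≤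
      Real.exp (p * lam * (1 + lam * F) * n) := by
  have h1 : ∀ N, N ⊆ A → Real.exp (lam * ((∑ y ∈ N, w y : ℕ) : ℝ)) =
      ∏ y ∈ N, Real.exp (lam * w y) := by
    intro N _
    rw [← Real.exp_sum, Nat.cast_sum, Finset.mul_sum]
  rw [subsetExp_congr h1, subsetExp_prod]
  calc ∏ y ∈ A, (1 - p + p * Real.exp (lam * w y))
      ≤ ∏ y ∈ A, Real.exp (p * lam * (1 + lam * F) * w y) := by
        refine Finset.prod_le_prod (fun y _ => ?_) fun y hy => ?_
        · have := mul_nonneg hp0 (Real.exp_pos (lam * w y)).le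
          linarith
        · have hwF : (w y : ℝ) ≤ F := by exact_mod_cast hw y hy
          have h0 : 0 ≤ lam * w y := by positivity
          have hle : lam * w y ≤ lam * F := mul_le_mul_of_nonneg_left hwF hl0
          have h2 := (abs_le.1 (Real.abs_exp_sub_one_sub_id_le (x := lam * w y)
            (by rw [abs_of_nonneg h0]; linarith))).2
          have h3 : Real.exp (lam * w y) - 1 ≤ lam * (1 + lam * F) * w y := by nlinarith
          have h4 := Real.add_one_le_exp (p * lam * (1 + lam * F) * w y)
          nlinarith
    _ = Real.exp (p * lam * (1 + lam * F) * ((∑ y ∈ A, w y : ℕ) : ℝ)) := by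
        rw [← Real.exp_sum, Nat.cast_sum, Finset.mul_sum]
    _ ≤ _ := by
        refine Real.exp_le_exp.2 (mul_le_mul_of_nonneg_left hn (by positivity))

theorem nbr_univ_eq (S : Finset (Bool × Sym2 M)) (c : Bool) (x : M) :
    nbr S c univ x = nbr (S ∩ star c (univ.erase x) x) c (univ.erase x) x := by
  rw [nbr_inter_star]
  ext y
  simp only [mem_nbr, mem_univ, mem_erase, true_and, and_true]
  exact ⟨fun h => ⟨h.1.symm, h⟩, fun h => h.2⟩

theorem subsetProb_not_degreeLE_le {D lam : ℝ} {F : ℕ} (hp0 : 0 ≤ p) (hp1 : p ≤ 1)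
    (hl0 : 0 ≤ lam) (hl : lam * F ≤ 1) (hF : ∀ c y, wt π univ c y ≤ F) :
    subsetProb p univ (fun S => ¬ DegreeLE π D S) ≤ (2 * Fintype.card M) *
      (Real.exp (p * lam * (1 + lam * F) * Fintype.card V - lam * D)) := by
  classical
  have h1 : subsetProb p univ (fun S => ¬ DegreeLE π D S) ≤ subsetProb p univ (fun S =>
      ∃ i ∈ (univ : Finset (Bool × M)),
        D < #(univ.filter fun v => BAdj S i.1 i.2 (π i.1 v))) := by
    refine subsetProb_mono hp0 hp1 fun S _ hS => ?_
    simp only [DegreeLE, not_forall, not_le] at hS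
    obtain ⟨c, x, h⟩ := hS
    exact ⟨(c, x), mem_univ _, h⟩
  refine h1.trans ((subsetProb_exists_le hp0 hp1 _ _
    (b := Real.exp (p * lam * (1 + lam * F) * Fintype.card V - lam * D)) fun i _ => ?_).trans
    (by simp))
  obtain ⟨c, x⟩ := i
  simp only
  have hcard : ∀ S : Finset (Bool × Sym2 M), #(univ.filter fun v => BAdj S c x (π c v)) =
      ∑ y ∈ nbr (S ∩ star c (univ.erase x) x) c (univ.erase x) x, wt π univ c y := by
    intro S
    rw [← nbr_univ_eq, sum_wt]
    simp [mem_nbr]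
  calc subsetProb p univ (fun S => D < #(univ.filter fun v => BAdj S c x (π c v)))
      ≤ subsetExp p univ (fun S => Real.exp (-(lam * D)) * Real.exp (lam *
        ((∑ y ∈ nbr (S ∩ star c (univ.erase x) x) c (univ.erase x) x, wt π univ c y : ℕ) : ℝ))) := by
        refine subsetExp_mono hp0 hp1 fun S _ => ?_
        split_ifs with h
        · change D < _ at h
          rw [hcard] at h
          rw [← Real.exp_add]
          refine Real.one_le_exp ?_
          nlinarith
        · positivity
    _ = Real.exp (-(lam * D)) * subsetExp p (univ.erase x) (fun N => Real.exp (lam *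
        ((∑ y ∈ N, wt π univ c y : ℕ) : ℝ))) := by
        rw [subsetExp_mul_left, subsetExp_inter_of_subset (subset_univ _) (fun S =>
          Real.exp (lam * ((∑ y ∈ nbr S c (univ.erase x) x, wt π univ c y : ℕ) : ℝ))),
          subsetExp_star (notMem_erase x univ)
            (fun N => Real.exp (lam * ((∑ y ∈ N, wt π univ c y : ℕ) : ℝ)))]
    _ ≤ Real.exp (-(lam * D)) * Real.exp (p * lam * (1 + lam * F) * Fintype.card V) := by
        refine mul_le_mul_of_nonneg_left ?_ (Real.exp_pos _).le
        refine subsetExp_exp_sum_le hp0 hp1 hl0 hl (fun y _ => hF c y) ?_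
        rw [sum_wt]
        exact_mod_cast Finset.card_le_univ _
    _ = _ := by rw [← Real.exp_add]; ring_nf

theorem subsetProb_not_codegreeLE_le {q : ℕ} (hp0 : 0 ≤ p) (hp1 : p ≤ 1) :
    subsetProb p (univ : Finset (Bool × Sym2 M)) (fun S => ¬ CodegreeLE q S) ≤
      2 * (Fintype.card M : ℝ) ^ 2 * (Fintype.card M * p ^ 2) ^ (q + 1) := by
  have h1 : subsetProb p (univ : Finset (Bool × Sym2 M)) (fun S => ¬ CodegreeLE q S) ≤
      subsetProb p univ (fun S =>
      ∃ i ∈ (univ : Finset (Bool × M × M)) ×ˢ powersetCard (q + 1) (univ : Finset M),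
        i.1.2.1 ≠ i.1.2.2 ∧ i.2 ⊆ nbr S i.1.1 univ i.1.2.1 ∩ nbr S i.1.1 univ i.1.2.2) := by
    refine subsetProb_mono hp0 hp1 fun S _ hS => ?_
    simp only [CodegreeLE, not_forall, not_le] at hS
    obtain ⟨c, x, y, hxy, h⟩ := hS
    obtain ⟨Y, hY, hYc⟩ := Finset.exists_subset_card_eq (Nat.succ_le_of_lt h)
    exact ⟨((c, x, y), Y), by simp [mem_powersetCard, hYc], hxy, hY⟩
  refine h1.trans ((subsetProb_exists_le hp0 hp1 _ _ (b := (p ^ 2) ^ (q + 1)) ?_).trans ?_)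
  · rintro ⟨⟨c, x, y⟩, Y⟩ hi
    have hYc : #Y = q + 1 := by simpa using hi
    simp only
    by_cases hbad : x ≠ y ∧ x ∉ Y ∧ y ∉ Y
    · obtain ⟨hxy, hx, hy⟩ := hbad
      have hinj : ∀ x : M, #(star c Y x) = #Y := by
        intro x
        refine Finset.card_image_of_injective _ fun a b h => ?_
        have h : a = b ∨ x = b ∧ a = x := by simpa [Sym2.eq_iff] using h
        rcases h with h | ⟨h1, h2⟩
        · exact h
        · exact h2.trans h1
      have hdisj : Disjoint (star c Y x) (star c Y y) := by
        rw [Finset.disjoint_left]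
        intro e he he'
        obtain ⟨a, ha, rfl⟩ := Finset.mem_image.1 he
        obtain ⟨b, hb, h⟩ := Finset.mem_image.1 he'
        simp only [Prod.mk.injEq, Sym2.eq_iff, true_and] at h
        rcases h with ⟨h, -⟩ | ⟨rfl, rfl⟩
        · exact hxy h.symm
        · exact hx hb
      have hc : #(star c Y x ∪ star c Y y) = 2 * (q + 1) := by
        rw [Finset.card_union_of_disjoint hdisj, hinj, hinj, hYc]; ring
      rw [← pow_mul, ← hc, ← subsetProb_subset_eq (subset_univ _)]
      refine subsetProb_mono hp0 hp1 fun S _ h => ?_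
      intro e he
      rcases Finset.mem_union.1 he with he | he
      · obtain ⟨a, ha, rfl⟩ := Finset.mem_image.1 he
        exact (mem_nbr.1 (Finset.mem_inter.1 (h.2 ha)).1).2.2
      · obtain ⟨a, ha, rfl⟩ := Finset.mem_image.1 he
        exact (mem_nbr.1 (Finset.mem_inter.1 (h.2 ha)).2).2.2
    · rw [subsetProb_eq_zero]
      · positivity
      · rintro S - ⟨hxy, hY⟩
        refine hbad ⟨hxy, fun h => ?_, fun h => ?_⟩
        · exact (mem_nbr.1 (Finset.mem_inter.1 (hY h)).1).2.1 rfl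
        · exact (mem_nbr.1 (Finset.mem_inter.1 (hY h)).2).2.1 rfl
  · rw [Finset.card_product, Finset.card_powersetCard]
    have h2 : (((Fintype.card M).choose (q + 1) : ℕ) : ℝ) ≤ (Fintype.card M : ℝ) ^ (q + 1) := by
      exact_mod_cast Nat.choose_le_pow _ _
    have h3 : ((#(univ : Finset (Bool × M × M)) : ℕ) : ℝ) = 2 * (Fintype.card M : ℝ) ^ 2 := by
      simp; ring
    rw [Nat.cast_mul, h3, Finset.card_univ, mul_pow (Fintype.card M : ℝ), mul_assoc, mul_assoc,
      mul_assoc]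
    gcongr

end Degrees

section HeavySpots

variable {V M : Type*} [Fintype V] [DecidableEq V] [Fintype M] [DecidableEq M]
variable {π : Bool → V → M} {p : ℝ}

/-- Some `s` vertices of a projection of a set of size `k` are incident with at least `h` edges
inside this projection. -/
def HeavySpot (π : Bool → V → M) (k s h : ℕ) (S : Finset (Bool × Sym2 M)) : Prop :=
  ∃ I ∈ powersetCard k (univ : Finset V), ∃ c ∈ (univ : Finset Bool),
    ∃ X ∈ (proj π I c).powerset, #X = s ∧ h ≤ #(S ∩ (X ×ˢ proj π I c).image (toPair c))

theorem card_proj_le (I : Finset V) (c : Bool) : #(proj π I c) ≤ #I := Finset.card_image_le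

theorem subsetProb_heavySpot_le {k s h : ℕ} {t : ℝ} (hp0 : 0 ≤ p) (hp1 : p ≤ 1) (ht : 1 ≤ t) :
    subsetProb p univ (HeavySpot π k s h) ≤ (Fintype.card V : ℝ) ^ k *
      (2 * (2 ^ k * (Real.exp (p * t * (s * k)) / t ^ h))) := by
  have ht0 : 0 < t := by linarith
  refine (subsetProb_exists_le hp0 hp1 _ _
    (b := 2 * (2 ^ k * (Real.exp (p * t * (s * k)) / t ^ h))) fun I hI => ?_).trans ?_
  · have hIk : #I = k := (Finset.mem_powersetCard.1 hI).2
    refine (subsetProb_exists_le hp0 hp1 _ _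
      (b := 2 ^ k * (Real.exp (p * t * (s * k)) / t ^ h)) fun c _ => ?_).trans (by simp)
    refine (subsetProb_exists_le hp0 hp1 _ _
      (b := Real.exp (p * t * (s * k)) / t ^ h) fun X _ => ?_).trans ?_
    · by_cases hX : #X = s
      · refine le_trans (subsetProb_mono hp0 hp1 fun S _ h => h.2)
          (subsetProb_card_inter_le hp0 hp1 ht h _ ?_)
        have h1 : #((X ×ˢ proj π I c).image (toPair c)) ≤ s * k := by
          refine Finset.card_image_le.trans ?_
          rw [Finset.card_product, hX]
          exact Nat.mul_le_mul_left _ ((card_proj_le I c).trans hIk.le)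
        exact_mod_cast h1
      · rw [subsetProb_eq_zero fun S _ h => hX h.1]
        positivity
    · rw [Finset.card_powerset]
      have : 2 ^ #(proj π I c) ≤ 2 ^ k :=
        Nat.pow_le_pow_right (by norm_num) ((card_proj_le I c).trans hIk.le)
      have h2 : ((2 ^ #(proj π I c) : ℕ) : ℝ) ≤ 2 ^ k := by exact_mod_cast this
      gcongr
  · rw [Finset.card_powersetCard, Finset.card_univ]
    have : (((Fintype.card V).choose k : ℕ) : ℝ) ≤ (Fintype.card V : ℝ) ^ k := by
      exact_mod_cast Nat.choose_le_pow _ _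
    gcongr

theorem exists_lowDegree_subset {k s h F κ : ℕ} {Δ : ℝ} (hF : ∀ c y, wt π univ c y ≤ F)
    {S : Finset (Bool × Sym2 M)} (hS : ¬ HeavySpot π k s h S) (hΔ : 2 * (h : ℝ) ≤ s * Δ)
    (hκ : κ + 2 * (s * F) ≤ k) {I : Finset V} (hI : #I = k) :
    ∃ J ⊆ I, #J = κ ∧ LowDegree π Δ J S := by
  classical
  set X : Bool → Finset M := fun c =>
    (proj π I c).filter fun x => Δ < #(nbr S c (proj π I c) x) with hX
  have hXs : ∀ c, #(X c) ≤ s := by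
    intro c
    by_contra! hc
    obtain ⟨Y, hY, hYs⟩ := Finset.exists_subset_card_eq hc.le
    refine hS ⟨I, by simp [mem_powersetCard, hI], c, mem_univ _, Y,
      Finset.mem_powerset.2 (hY.trans (Finset.filter_subset _ _)), hYs, ?_⟩
    set P := (Y ×ˢ proj π I c).filter fun q => BAdj S c q.1 q.2 with hP
    have h1 : P.image (toPair c) ⊆ S ∩ (Y ×ˢ proj π I c).image (toPair c) := by
      intro e he
      obtain ⟨q, hq, rfl⟩ := Finset.mem_image.1 he
      rw [hP, Finset.mem_filter] at hq
      exact Finset.mem_inter.2 ⟨hq.2.2, Finset.mem_image_of_mem _ hq.1⟩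
    have h2 : #P = ∑ x ∈ Y, #(nbr S c (proj π I c) x) := by
      rw [hP, Finset.card_filter, Finset.sum_product]
      refine Finset.sum_congr rfl fun x _ => ?_
      rw [nbr, Finset.card_filter]
    have h3 : (s : ℝ) * Δ ≤ #P := by
      rw [h2, ← hYs, ← nsmul_eq_mul, Nat.cast_sum]
      exact Finset.card_nsmul_le_sum _ _ _ fun x hx => (Finset.mem_filter.1 (hY hx)).2.le
    have h4 : 2 * h ≤ #P := by exact_mod_cast hΔ.trans h3
    have h5 := card_le_two_mul_card_image_toPair c P
    have h6 := Finset.card_le_card h1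
    omega
  have hR : ∀ c, #(I.filter fun u => π c u ∈ X c) ≤ s * F := by
    intro c
    rw [← sum_wt]
    refine (Finset.sum_le_card_nsmul _ _ F fun y _ => ?_).trans ?_
    · refine le_trans (Finset.card_le_card ?_) (hF c y)
      exact Finset.filter_subset_filter _ (subset_univ _)
    · rw [smul_eq_mul]; exact Nat.mul_le_mul_right _ (hXs c)
  set J₀ := I \ (univ.biUnion fun c => I.filter fun u => π c u ∈ X c) with hJ₀
  have hJ₀c : κ ≤ #J₀ := by
    have h1 := Finset.le_card_sdiff (univ.biUnion fun c => I.filter fun u => π c u ∈ X c) I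
    have h2 : #(univ.biUnion fun c => I.filter fun u => π c u ∈ X c) ≤ 2 * (s * F) := by
      refine Finset.card_biUnion_le.trans ?_
      refine (Finset.sum_le_card_nsmul _ _ _ fun c _ => hR c).trans (by simp)
    rw [← hJ₀] at h1
    omega
  obtain ⟨J, hJ, hJc⟩ := Finset.exists_subset_card_eq hJ₀c
  have hJI : J ⊆ I := hJ.trans Finset.sdiff_subset
  refine ⟨J, hJI, hJc, fun c x hx => ?_⟩
  obtain ⟨u, hu, rfl⟩ := Finset.mem_image.1 hx
  have hu0 := hJ hu
  simp only [hJ₀, mem_sdiff, mem_biUnion, mem_univ, true_and, mem_filter, not_exists, not_and] at hu0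
  have h1 := hu0.2 c hu0.1
  simp only [hX, mem_filter, not_and, not_lt] at h1
  refine le_trans ?_ (h1 (pi_mem_proj hu0.1 c))
  norm_cast
  exact Finset.card_le_card (Finset.filter_subset_filter _ (Finset.image_subset_image hJI))

end HeavySpots

section InnerPairs

variable {V M : Type*} [Fintype V] [DecidableEq V] [Fintype M] [DecidableEq M]
variable {π : Bool → V → M} {I : Finset V} {ρ : Bool → M → V} {p : ℝ}

theorem innerPairs_subset (S : Finset (Bool × Sym2 M)) (c c' : Bool) :
    innerPairs π I ρ c c' S ⊆
      (proj π I c').biUnion fun x => (closedBy π I ρ S c c' x).image (toPair c) := by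
  intro e he
  simp only [innerPairs, mem_image, mem_filter] at he
  obtain ⟨q, ⟨hq, x, hx, h⟩, rfl⟩ := he
  simp only [mem_biUnion, mem_image, closedBy, mem_filter]
  exact ⟨x, hx, q, ⟨hq, h⟩, rfl⟩

theorem card_innerPairs_le (hρ : IsSection π I ρ) {F : ℕ} (hF : ∀ c y, wt π I c y ≤ F) {Δ k : ℝ}
    (hIk : (#I : ℝ) ≤ k) {S : Finset (Bool × Sym2 M)} {c c' : Bool}
    (hΔ : ∀ x ∈ proj π I c', (#(nbr S c' (proj π I c') x) : ℝ) ≤ Δ) :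
    (#(innerPairs π I ρ c c' S) : ℝ) ≤ k * (F * Δ) ^ 2 := by
  have h1 : #(innerPairs π I ρ c c' S) ≤ ∑ x ∈ proj π I c',
      (#(nbr S c' (proj π I c') x) * F) ^ 2 := by
    refine (Finset.card_le_card (innerPairs_subset S c c')).trans
      (Finset.card_biUnion_le.trans (Finset.sum_le_sum fun x hx => ?_))
    refine Finset.card_image_le.trans ((card_closedBy_le hρ S c c' x).trans ?_)
    set N := nbr S c' (proj π I c') x
    calc ∑ q ∈ N.offDiag, wt π I c' q.1 * wt π I c' q.2 ≤ ∑ q ∈ N.offDiag, F * F :=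
          Finset.sum_le_sum fun q _ => Nat.mul_le_mul (hF _ _) (hF _ _)
      _ = #N.offDiag * (F * F) := by rw [Finset.sum_const, smul_eq_mul]
      _ ≤ (#N * #N) * (F * F) := by
          rw [Finset.offDiag_card]; exact Nat.mul_le_mul_right _ (Nat.sub_le _ _)
      _ = _ := by ring
  have h2 : (#(innerPairs π I ρ c c' S) : ℝ) ≤ ∑ x ∈ proj π I c',
      ((#(nbr S c' (proj π I c') x) : ℝ) * F) ^ 2 := by exact_mod_cast h1
  refine h2.trans ((Finset.sum_le_card_nsmul _ _ ((F * Δ) ^ 2) fun x hx => ?_).trans ?_)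
  · refine pow_le_pow_left₀ (by positivity) ?_ 2
    rw [mul_comm]
    exact mul_le_mul_of_nonneg_left (hΔ x hx) (Nat.cast_nonneg _)
  · rw [nsmul_eq_mul]
    refine mul_le_mul_of_nonneg_right (le_trans ?_ hIk) (sq_nonneg _)
    exact_mod_cast card_proj_le I c'

/-- The pairs of one colour. -/
def ofColour (c : Bool) : Finset (Bool × Sym2 M) := univ.filter fun e => e.1 = c

theorem badj_inter_ofColour {S : Finset (Bool × Sym2 M)} {c : Bool} {x y : M} :
    BAdj (S ∩ ofColour c) c x y ↔ BAdj S c x y := by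
  simp [BAdj, ofColour]

theorem subsetProb_cross_le (hρ : IsSection π I ρ) {F : ℕ} (hF : ∀ c y, wt π I c y ≤ F)
    {Δ k t : ℝ} {i : ℕ} (hp0 : 0 ≤ p) (hp1 : p ≤ 1) (ht : 1 ≤ t) (hIk : (#I : ℝ) ≤ k)
    {c c' : Bool} (hc : c ≠ c') :
    subsetProb p univ (fun S => LowDegree π Δ I S ∧ i ≤ #(S ∩ innerPairs π I ρ c c' S)) ≤
      Real.exp (p * t * (k * (F * Δ) ^ 2)) / t ^ i := by
  set E : Finset (Bool × Sym2 M) := ofColour c' with hE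
  have huniv : (univ : Finset (Bool × Sym2 M)) = E ∪ (univ \ E) := by
    rw [Finset.union_sdiff_of_subset (Finset.subset_univ _)]
  rw [huniv]
  refine le_trans (subsetProb_mono hp0 hp1 fun S _ hS => ?_)
    (subsetProb_exposed_card_le Finset.disjoint_sdiff hp0 hp1 ht i
      (fun S => ∀ x ∈ proj π I c', (#(nbr S c' (proj π I c') x) : ℝ) ≤ Δ)
      (innerPairs π I ρ c c') fun S _ hS => card_innerPairs_le hρ hF hIk hS)
  have h1 : innerPairs π I ρ c c' (S ∩ E) = innerPairs π I ρ c c' S := by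
    simp only [innerPairs, hE, badj_inter_ofColour]
  refine ⟨fun x hx => ?_, ?_⟩
  · have : nbr (S ∩ E) c' (proj π I c') x = nbr S c' (proj π I c') x := by
      simp only [nbr, hE, badj_inter_ofColour]
    rw [this]
    exact hS.1 c' x hx
  · rw [h1]
    refine hS.2.trans (Finset.card_le_card fun e he => ?_)
    rw [Finset.mem_inter] at he
    refine Finset.mem_inter.2 ⟨Finset.mem_inter.2 ⟨he.1, ?_⟩, he.2⟩
    obtain ⟨q, -, rfl⟩ := Finset.mem_image.1 he.2
    simp [hE, ofColour, toPair, hc]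

/-- A random bipartition separates a positive proportion of a family of triples. -/
theorem exists_separating_subset {α ι : Type*} [DecidableEq α] (A : Finset α) (J : Finset ι)
    (x y y' : ι → α) (hx : ∀ e ∈ J, x e ∈ A ∧ y e ∈ A ∧ y' e ∈ A ∧ x e ≠ y e ∧ x e ≠ y' e ∧
      y e ≠ y' e) :
    ∃ K ⊆ A, #J ≤ 8 * #(J.filter fun e => x e ∈ K ∧ y e ∉ K ∧ y' e ∉ K) := by
  classical
  by_contra! h
  have hE : ∀ T : Finset α, T ⊆ A → subsetExp (1 / 2) A (fun K => (0 : ℝ) ^ #(K ∩ T)) =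
      (1 / 2) ^ #T := by
    intro T hT
    rw [subsetExp_pow_card_inter, Finset.inter_eq_right.2 hT]
    norm_num
  have hind : ∀ e ∈ J, subsetExp (1 / 2) A (fun K =>
      if x e ∈ K ∧ y e ∉ K ∧ y' e ∉ K then (1 : ℝ) else 0) = 1 / 8 := by
    intro e he
    obtain ⟨h1, h2, h3, h4, h5, h6⟩ := hx e he
    have hpt : ∀ K, K ⊆ A → (if x e ∈ K ∧ y e ∉ K ∧ y' e ∉ K then (1 : ℝ) else 0) =
        (0 : ℝ) ^ #(K ∩ {y e, y' e}) + (-1) * (0 : ℝ) ^ #(K ∩ {x e, y e, y' e}) := by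
      intro K _
      have hz : ∀ T : Finset α, (0 : ℝ) ^ #(K ∩ T) = if Disjoint K T then 1 else 0 := by
        intro T
        by_cases hd : Disjoint K T
        · rw [if_pos hd, Finset.disjoint_iff_inter_eq_empty.1 hd]; simp
        · rw [if_neg hd, zero_pow]
          rw [Finset.disjoint_iff_inter_eq_empty] at hd
          simpa using hd
      rw [hz, hz]
      simp only [disjoint_insert_right, disjoint_singleton_right]
      by_cases a1 : x e ∈ K <;> by_cases a2 : y e ∈ K <;> by_cases a3 : y' e ∈ K <;>
        simp [a1, a2, a3]
    rw [subsetExp_congr hpt, subsetExp_add, subsetExp_mul_left, hE, hE]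
    · rw [Finset.card_pair h6, Finset.card_insert_of_notMem (by simp [h4, h5]),
        Finset.card_pair h6]
      norm_num
    · simp [insert_subset_iff, h1, h2, h3]
    · simp [insert_subset_iff, h2, h3]
  have hJ : (#J : ℝ) = 8 * subsetExp (1 / 2) A (fun K =>
      (#(J.filter fun e => x e ∈ K ∧ y e ∉ K ∧ y' e ∉ K) : ℝ)) := by
    have : ∀ K, K ⊆ A → (#(J.filter fun e => x e ∈ K ∧ y e ∉ K ∧ y' e ∉ K) : ℝ) =
        ∑ e ∈ J, if x e ∈ K ∧ y e ∉ K ∧ y' e ∉ K then (1 : ℝ) else 0 := by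
      intro K _
      rw [Finset.card_filter]; push_cast; rfl
    rw [subsetExp_congr this, subsetExp_sum, Finset.sum_congr rfl hind, Finset.sum_const,
      nsmul_eq_mul]
    ring
  have hlt : subsetExp (1 / 2) A (fun K =>
      (#(J.filter fun e => x e ∈ K ∧ y e ∉ K ∧ y' e ∉ K) : ℝ)) ≤ (#J - 1) / 8 := by
    rw [← subsetExp_const (1 / 2) A (((#J : ℝ) - 1) / 8)]
    refine subsetExp_mono (by norm_num) (by norm_num) fun K hK => ?_
    have := h K hK
    have h2 : 8 * (#(J.filter fun e => x e ∈ K ∧ y e ∉ K ∧ y' e ∉ K) : ℝ) + 1 ≤ #J := by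
      exact_mod_cast this
    linarith
  linarith

/-- The pairs outside `K` that have a common neighbour in `K`. -/
def splitPairs (c : Bool) (A K : Finset M) (S : Finset (Bool × Sym2 M)) :
    Finset (Bool × Sym2 M) :=
  ((A \ K).offDiag.filter fun q => ∃ x ∈ K, BAdj S c x q.1 ∧ BAdj S c x q.2).image (toPair c)

theorem card_splitPairs_le {c : Bool} {A K : Finset M} {S : Finset (Bool × Sym2 M)} {Δ k : ℝ}
    (hK : (#K : ℝ) ≤ k) (hΔ : ∀ x ∈ K, (#(nbr S c (A \ K) x) : ℝ) ≤ Δ) :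
    (#(splitPairs c A K S) : ℝ) ≤ k * Δ ^ 2 := by
  have h1 : #(splitPairs c A K S) ≤ ∑ x ∈ K, #(nbr S c (A \ K) x) ^ 2 := by
    refine Finset.card_image_le.trans ?_
    calc _ ≤ #(K.biUnion fun x => nbr S c (A \ K) x ×ˢ nbr S c (A \ K) x) := by
          refine Finset.card_le_card fun q hq => ?_
          rw [mem_filter, mem_offDiag] at hq
          obtain ⟨⟨h1, h2, -⟩, x, hx, h3, h4⟩ := hq
          simp only [mem_biUnion, mem_product, mem_nbr]
          exact ⟨x, hx, ⟨h1, h3⟩, h2, h4⟩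
      _ ≤ _ := by
          refine Finset.card_biUnion_le.trans (Finset.sum_le_sum fun x _ => ?_)
          rw [Finset.card_product, sq]
  have h2 : (#(splitPairs c A K S) : ℝ) ≤ ∑ x ∈ K, (#(nbr S c (A \ K) x) : ℝ) ^ 2 := by
    exact_mod_cast h1
  refine h2.trans ((Finset.sum_le_card_nsmul _ _ (Δ ^ 2) fun x hx => ?_).trans ?_)
  · exact pow_le_pow_left₀ (by positivity) (hΔ x hx) 2
  · rw [nsmul_eq_mul]
    exact mul_le_mul_of_nonneg_right hK (sq_nonneg _)

theorem exists_split (hρ : IsSection π I ρ) {S : Finset (Bool × Sym2 M)} {c : Bool} {i : ℕ}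
    (hS : 8 * i ≤ #(S ∩ innerPairs π I ρ c c S)) :
    ∃ K ⊆ proj π I c, i ≤ #(S ∩ splitPairs c (proj π I c) K S) := by
  set A := proj π I c with hA
  set J := S ∩ innerPairs π I ρ c c S with hJ
  have key : ∀ e : J, ∃ t : M × M × M, t.1 ∈ A ∧ t.2.1 ∈ A ∧ t.2.2 ∈ A ∧ t.2.1 ≠ t.2.2 ∧
      BAdj S c t.1 t.2.1 ∧ BAdj S c t.1 t.2.2 ∧ e.1 = toPair c t.2 := by
    rintro ⟨e, he⟩
    have he' := (Finset.mem_inter.1 he).2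
    simp only [innerPairs, mem_image, mem_filter, mem_offDiag] at he'
    obtain ⟨q, ⟨⟨h1, h2, h3⟩, x, hx, -, h4, h5⟩, rfl⟩ := he'
    rw [(hρ c _ h1).2] at h4
    rw [(hρ c _ h2).2] at h5
    exact ⟨(x, q), hx, h1, h2, h3, h4.symm, h5.symm, rfl⟩
  choose t ht using key
  obtain ⟨K, hK, hc⟩ := exists_separating_subset A (univ : Finset J) (fun e => (t e).1)
    (fun e => (t e).2.1) (fun e => (t e).2.2)
    (fun e _ => ⟨(ht e).1, (ht e).2.1, (ht e).2.2.1, (ht e).2.2.2.2.1.1, (ht e).2.2.2.2.2.1.1,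
      (ht e).2.2.2.1⟩)
  refine ⟨K, hK, ?_⟩
  have h1 : #((univ : Finset J).filter fun e => (t e).1 ∈ K ∧ (t e).2.1 ∉ K ∧ (t e).2.2 ∉ K) ≤
      #(S ∩ splitPairs c A K S) := by
    refine Finset.card_le_card_of_injOn (fun e => e.1) ?_ (Subtype.val_injective.injOn)
    intro e he
    have he : (t e).1 ∈ K ∧ (t e).2.1 ∉ K ∧ (t e).2.2 ∉ K := by simpa using he
    obtain ⟨h1, h2, h3, h4, h5, h6, h7⟩ := ht e
    simp only [coe_inter, Set.mem_inter_iff, mem_coe]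
    refine ⟨(Finset.mem_inter.1 e.2).1, ?_⟩
    simp only [splitPairs, mem_image, mem_filter, mem_offDiag, mem_sdiff]
    exact ⟨(t e).2, ⟨⟨⟨h2, he.2.1⟩, ⟨h3, he.2.2⟩, h4⟩, (t e).1, he.1, h5, h6⟩, h7.symm⟩
  rw [Finset.card_univ, Fintype.card_coe] at hc
  omega

theorem subsetProb_same_le (hρ : IsSection π I ρ) {Δ t : ℝ} {i k : ℕ} (hp0 : 0 ≤ p)
    (hp1 : p ≤ 1) (ht : 1 ≤ t) (hIk : #I ≤ k) (c : Bool) :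
    subsetProb p univ (fun S => LowDegree π Δ I S ∧ 8 * i ≤ #(S ∩ innerPairs π I ρ c c S)) ≤
      2 ^ k * (Real.exp (p * t * (k * Δ ^ 2)) / t ^ i) := by
  set A := proj π I c with hA
  have hAk : #A ≤ k := (card_proj_le I c).trans hIk
  have ht0 : 0 < t := by linarith
  refine le_trans (subsetProb_mono hp0 hp1 (Q := fun S => ∃ K ∈ A.powerset,
    LowDegree π Δ I S ∧ i ≤ #(S ∩ splitPairs c A K S)) fun S _ hS => ?_)
    ((subsetProb_exists_le hp0 hp1 _ _ (b := Real.exp (p * t * (k * Δ ^ 2)) / t ^ i)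
      fun K hK => ?_).trans ?_)
  · obtain ⟨K, hK, h⟩ := exists_split hρ hS.2
    exact ⟨K, Finset.mem_powerset.2 hK, hS.1, h⟩
  · rw [Finset.mem_powerset] at hK
    set E : Finset (Bool × Sym2 M) := (K ×ˢ (A \ K)).image (toPair c) with hE
    have huniv : (univ : Finset (Bool × Sym2 M)) = E ∪ (univ \ E) := by
      rw [Finset.union_sdiff_of_subset (Finset.subset_univ _)]
    have hadj : ∀ S : Finset (Bool × Sym2 M), ∀ x ∈ K, ∀ y ∈ A \ K,
        (BAdj (S ∩ E) c x y ↔ BAdj S c x y) := by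
      intro S x hx y hy
      have : (c, s(x, y)) ∈ E :=
        Finset.mem_image.2 ⟨(x, y), Finset.mem_product.2 ⟨hx, hy⟩, rfl⟩
      simp [BAdj, this]
    have hKk : (#K : ℝ) ≤ k := by exact_mod_cast (Finset.card_le_card hK).trans hAk
    rw [huniv]
    refine le_trans (subsetProb_mono hp0 hp1 fun S _ hS => ?_)
      (subsetProb_exposed_card_le Finset.disjoint_sdiff hp0 hp1 ht i
        (fun S => ∀ x ∈ K, (#(nbr S c (A \ K) x) : ℝ) ≤ Δ)
        (splitPairs c A K) fun S _ hS => card_splitPairs_le hKk hS)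
    have h1 : splitPairs c A K (S ∩ E) = splitPairs c A K S := by
      rw [splitPairs, splitPairs]
      congr 1
      refine Finset.filter_congr fun q hq => exists_congr fun x => and_congr_right fun hx => ?_
      rw [mem_offDiag] at hq
      rw [hadj S x hx _ hq.1, hadj S x hx _ hq.2.1]
    refine ⟨fun x hx => le_trans ?_ (hS.1 c x (hK hx)), ?_⟩
    · norm_cast
      refine Finset.card_le_card fun y hy => ?_
      rw [mem_nbr] at hy ⊢
      exact ⟨(Finset.mem_sdiff.1 hy.1).1, (hadj S x hx y hy.1).1 hy.2⟩
    · rw [h1]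
      refine hS.2.trans (Finset.card_le_card fun e he => ?_)
      rw [Finset.mem_inter] at he
      refine Finset.mem_inter.2 ⟨Finset.mem_inter.2 ⟨he.1, ?_⟩, he.2⟩
      obtain ⟨q, hq, rfl⟩ := Finset.mem_image.1 he.2
      rw [mem_filter, mem_offDiag, mem_sdiff, mem_sdiff] at hq
      simp only [mem_sdiff, mem_univ, true_and, hE, mem_image, not_exists, not_and, mem_product]
      rintro ⟨a, b⟩ ⟨ha, -⟩ h
      simp only [toPair, Prod.mk.injEq, Sym2.eq_iff, true_and] at h
      simp only at ha
      rcases h with ⟨h, -⟩ | ⟨h, -⟩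
      · exact hq.1.1.2 (h ▸ ha)
      · exact hq.1.2.1.2 (h ▸ ha)
  · rw [Finset.card_powerset]
    have h2 : ((2 ^ #A : ℕ) : ℝ) ≤ 2 ^ k := by
      exact_mod_cast Nat.pow_le_pow_right (by norm_num) hAk
    gcongr

/-- The bound for the probability that many edges of a set with low degrees are closed by a common
neighbour inside the set. -/
theorem subsetProb_many_inner_le (hρ : IsSection π I ρ) {F : ℕ} (hF0 : 0 < F)
    (hF : ∀ c y, wt π I c y ≤ F) {Δ t : ℝ} {i k : ℕ} (hp0 : 0 ≤ p) (hp1 : p ≤ 1) (ht : 1 ≤ t)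
    (hΔ : 0 ≤ Δ) (hIk : #I ≤ k) :
    subsetProb p univ (fun S => ∃ j ∈ (univ : Finset (Bool × Bool)), LowDegree π Δ I S ∧
      8 * i ≤ #(S ∩ innerPairs π I ρ j.1 j.2 S)) ≤
      4 * (2 ^ k * (Real.exp (p * t * (k * (F * Δ) ^ 2)) / t ^ i)) := by
  have ht0 : 0 < t := by linarith
  refine (subsetProb_exists_le hp0 hp1 _ _
    (b := 2 ^ k * (Real.exp (p * t * (k * (F * Δ) ^ 2)) / t ^ i)) ?_).trans (by simp)
  rintro ⟨c, c'⟩ -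
  by_cases hc : c = c'
  · subst hc
    refine (subsetProb_same_le hρ hp0 hp1 ht hIk c).trans ?_
    have h1 : Δ ≤ F * Δ := by
      have : (1 : ℝ) ≤ F := by exact_mod_cast hF0
      nlinarith
    gcongr
  · have hle := subsetProb_cross_le (k := k) (i := i) (Δ := Δ) hρ hF hp0 hp1 ht
      (by exact_mod_cast hIk) hc
    refine le_trans (subsetProb_mono hp0 hp1
      (Q := fun S => LowDegree π Δ I S ∧ i ≤ #(S ∩ innerPairs π I ρ c c' S))
      fun S _ hS => ⟨hS.1, le_trans (by omega) hS.2⟩) (hle.trans ?_)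
    exact le_mul_of_one_le_left (by positivity) (one_le_pow₀ (by norm_num))

end InnerPairs

section RandomMaps

variable {V M : Type*} [Fintype V] [DecidableEq V] [Fintype M] [DecidableEq M] [Nonempty M]

theorem card_filter_forall_mem (I : Finset V) (R : Finset M) :
    (#(univ.filter fun g : V → M => ∀ v ∈ I, g v ∈ R) : ℝ) =
      (#R / Fintype.card M : ℝ) ^ #I * (Fintype.card M : ℝ) ^ Fintype.card V := by
  have hm : (Fintype.card M : ℝ) ≠ 0 := by exact_mod_cast Fintype.card_ne_zero
  have h1 : (univ.filter fun g : V → M => ∀ v ∈ I, g v ∈ R) =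
      Fintype.piFinset fun v => if v ∈ I then R else univ := by
    ext g
    simp only [mem_filter, mem_univ, true_and, Fintype.mem_piFinset]
    refine forall_congr' fun v => ?_
    by_cases hv : v ∈ I <;> simp [hv]
  have h2 : #I + #(univ.filter fun v => v ∉ I) = Fintype.card V := by
    rw [← Finset.card_univ, ← Finset.card_filter_add_card_filter_not (s := univ) (fun v => v ∈ I)]
    simp
  rw [h1, Fintype.card_piFinset]
  push_cast
  rw [← h2, pow_add, ← mul_assoc, div_pow, div_mul_cancel₀ _ (pow_ne_zero _ hm)]
  have h3 : ∀ v, ((#(if v ∈ I then R else univ) : ℕ) : ℝ) =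
      if v ∈ I then (#R : ℝ) else Fintype.card M := by
    intro v
    split_ifs <;> simp
  simp only [h3, Finset.prod_ite, Finset.prod_const]
  simp

theorem sum_card_image_le (I : Finset V) {Φ : ℕ → ℝ} (hΦ : ∀ r, 0 ≤ Φ r) {B : ℝ}
    (hB : ∀ r ≤ #I, (Fintype.card M).choose r * ((r / Fintype.card M : ℝ) ^ #I * Φ r) ≤ B) :
    ∑ g : V → M, Φ #(I.image g) ≤ (#I + 1) * B * (Fintype.card M : ℝ) ^ Fintype.card V := by
  have h1 : ∀ g : V → M, Φ #(I.image g) ≤ ∑ r ∈ range (#I + 1),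
      ∑ R ∈ powersetCard r (univ : Finset M), if ∀ v ∈ I, g v ∈ R then Φ r else 0 := by
    intro g
    have hg : ∀ v ∈ I, g v ∈ I.image g := fun v hv => Finset.mem_image_of_mem _ hv
    refine le_trans ?_ (Finset.single_le_sum (f := fun r => ∑ R ∈ powersetCard r (univ : Finset M),
      if ∀ v ∈ I, g v ∈ R then Φ r else 0) (fun r _ => Finset.sum_nonneg fun R _ => ?_)
      (Finset.mem_range.2 (Nat.lt_succ_of_le (Finset.card_image_le (s := I) (f := g)))))
    · refine le_trans ?_ (Finset.single_le_sum (f := fun R =>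
        if ∀ v ∈ I, g v ∈ R then Φ #(I.image g) else 0) (fun R _ => ?_)
        (Finset.mem_powersetCard.2 ⟨Finset.subset_univ _, rfl⟩))
      · simp only [if_pos hg, le_refl]
      · split_ifs
        exacts [hΦ _, le_rfl]
    · split_ifs
      exacts [hΦ _, le_rfl]
  calc ∑ g : V → M, Φ #(I.image g)
      ≤ ∑ g : V → M, ∑ r ∈ range (#I + 1),
        ∑ R ∈ powersetCard r (univ : Finset M), if ∀ v ∈ I, g v ∈ R then Φ r else 0 :=
        Finset.sum_le_sum fun g _ => h1 g
    _ = ∑ r ∈ range (#I + 1), (Fintype.card M).choose r *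
          ((r / Fintype.card M : ℝ) ^ #I * Φ r) * (Fintype.card M : ℝ) ^ Fintype.card V := by
        rw [Finset.sum_comm]
        refine Finset.sum_congr rfl fun r _ => ?_
        rw [Finset.sum_comm]
        rw [Finset.sum_congr rfl fun R hR => (show _ = (r / Fintype.card M : ℝ) ^ #I *
          (Fintype.card M : ℝ) ^ Fintype.card V * Φ r from ?_)]
        · rw [Finset.sum_const, Finset.card_powersetCard, Finset.card_univ, nsmul_eq_mul]
          ring
        · rw [← Finset.sum_filter, Finset.sum_const, nsmul_eq_mul, card_filter_forall_mem,
            (Finset.mem_powersetCard.1 hR).2]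
    _ ≤ ∑ r ∈ range (#I + 1), B * (Fintype.card M : ℝ) ^ Fintype.card V := by
        refine Finset.sum_le_sum fun r hr => ?_
        have := hB r (Nat.lt_succ_iff.1 (Finset.mem_range.1 hr))
        gcongr
    _ = _ := by
        rw [Finset.sum_const, Finset.card_range, nsmul_eq_mul]
        push_cast
        ring

theorem sum_prod_card_proj_le (I : Finset V) {Φ : ℕ → ℝ} (hΦ : ∀ r, 0 ≤ Φ r) {B : ℝ}
    (hB : ∀ r ≤ #I, (Fintype.card M).choose r * ((r / Fintype.card M : ℝ) ^ #I * Φ r) ≤ B) :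
    ∑ π : Bool → V → M, ∏ c, Φ #(proj π I c) ≤
      ((#I + 1) * B) ^ 2 * (Fintype.card M ^ Fintype.card V : ℝ) ^ 2 := by
  have h1 : ∑ π : Bool → V → M, ∏ c, Φ #(proj π I c) =
      ∏ _c : Bool, ∑ g : V → M, Φ #(I.image g) := by
    rw [Finset.prod_univ_sum, Fintype.piFinset_univ]
    rfl
  rw [h1, Finset.prod_const, Finset.card_univ, Fintype.card_bool, ← mul_pow]
  exact pow_le_pow_left₀ (Finset.sum_nonneg fun g _ => hΦ _) (sum_card_image_le I hΦ hB) 2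

theorem card_filter_large_fibre_le (F : ℕ) :
    (#(univ.filter fun g : V → M => ∃ y, F < #(univ.filter fun v => g v = y)) : ℝ) ≤
      Fintype.card M * ((Fintype.card V).choose (F + 1) * (1 / Fintype.card M : ℝ) ^ (F + 1)) *
        (Fintype.card M : ℝ) ^ Fintype.card V := by
  have h1 : (univ.filter fun g : V → M => ∃ y, F < #(univ.filter fun v => g v = y)) ⊆
      ((univ : Finset M) ×ˢ powersetCard (F + 1) (univ : Finset V)).biUnion
        fun i => univ.filter fun g : V → M => ∀ v ∈ i.2, g v ∈ ({i.1} : Finset M) := by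
    intro g hg
    obtain ⟨y, hy⟩ := (Finset.mem_filter.1 hg).2
    obtain ⟨X, hX, hXc⟩ := Finset.exists_subset_card_eq (Nat.succ_le_of_lt hy)
    refine Finset.mem_biUnion.2 ⟨(y, X), Finset.mem_product.2 ⟨Finset.mem_univ _,
      Finset.mem_powersetCard.2 ⟨Finset.subset_univ _, hXc⟩⟩, Finset.mem_filter.2
      ⟨Finset.mem_univ _, fun v hv => Finset.mem_singleton.2 (Finset.mem_filter.1 (hX hv)).2⟩⟩
  refine le_trans (Nat.cast_le.2 ((Finset.card_le_card h1).trans Finset.card_biUnion_le)) ?_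
  push_cast
  rw [Finset.sum_congr rfl fun i hi => (show _ = (1 / Fintype.card M : ℝ) ^ (F + 1) *
    (Fintype.card M : ℝ) ^ Fintype.card V from ?_)]
  · rw [Finset.sum_const, Finset.card_product, Finset.card_powersetCard, Finset.card_univ,
      Finset.card_univ, nsmul_eq_mul]
    push_cast
    apply le_of_eq
    ring
  · rw [card_filter_forall_mem, Finset.card_singleton, Nat.cast_one,
      (Finset.mem_powersetCard.1 (Finset.mem_product.1 hi).2).2]

theorem card_filter_not_wt_le (F : ℕ) :
    (#(univ.filter fun π : Bool → V → M => ¬ ∀ c y, wt π univ c y ≤ F) : ℝ) ≤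
      2 * (Fintype.card M *
        ((Fintype.card V).choose (F + 1) * (1 / Fintype.card M : ℝ) ^ (F + 1))) *
        (Fintype.card M ^ Fintype.card V : ℝ) ^ 2 := by
  set L := univ.filter fun g : V → M => ∃ y, F < #(univ.filter fun v => g v = y) with hL
  have h1 : (univ.filter fun π : Bool → V → M => ¬ ∀ c y, wt π univ c y ≤ F) ⊆
      (univ : Finset Bool).biUnion fun c =>
        Fintype.piFinset fun c' => if c' = c then L else (univ : Finset (V → M)) := by
    intro π hπ
    have h2 := (Finset.mem_filter.1 hπ).2
    push Not at h2
    obtain ⟨c, y, h⟩ := h2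
    refine Finset.mem_biUnion.2 ⟨c, Finset.mem_univ _, Fintype.mem_piFinset.2 fun c' => ?_⟩
    split_ifs with hc
    · subst hc
      exact Finset.mem_filter.2 ⟨Finset.mem_univ _, y, h⟩
    · exact Finset.mem_univ _
  refine le_trans (Nat.cast_le.2 ((Finset.card_le_card h1).trans Finset.card_biUnion_le)) ?_
  have h3 := card_filter_large_fibre_le (V := V) (M := M) F
  rw [← hL] at h3
  have h4 : (0 : ℝ) ≤ (Fintype.card M : ℝ) ^ Fintype.card V := by positivity
  simp only [Fintype.card_piFinset, Fintype.sum_bool, Fintype.prod_bool]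
  simp only [if_true, Bool.false_eq_true, if_false, Bool.true_eq_false, Finset.card_univ,
    Fintype.card_fun]
  push_cast
  nlinarith [mul_le_mul_of_nonneg_right h3 h4]

/-- There are maps with small fibres for which an average over the projections of the `κ`-subsets
is small. -/
theorem exists_maps {Φ : ℕ → ℝ} (hΦ : ∀ r, 0 ≤ Φ r) {B A : ℝ} {κ F : ℕ}
    (hB : ∀ r ≤ κ, (Fintype.card M).choose r * ((r / Fintype.card M : ℝ) ^ κ * Φ r) ≤ B)
    (hA : 0 < A) (hAB : (Fintype.card V).choose κ * ((κ + 1) * B) ^ 2 ≤ A)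
    (hF : 2 * (Fintype.card M *
        ((Fintype.card V).choose (F + 1) * (1 / Fintype.card M : ℝ) ^ (F + 1))) < 1 / 2) :
    ∃ π : Bool → V → M, (∀ c y, wt π univ c y ≤ F) ∧
      ∑ I ∈ powersetCard κ univ, ∏ c, Φ #(proj π I c) ≤ 2 * A := by
  by_contra! hcon
  have hpos : (0 : ℝ) < (Fintype.card M ^ Fintype.card V : ℝ) ^ 2 := by
    have : (0 : ℝ) < Fintype.card M := by exact_mod_cast Fintype.card_pos
    positivity
  have h1 : ∀ π : Bool → V → M, (1 : ℝ) ≤ (if ¬ ∀ c y, wt π univ c y ≤ F then 1 else 0) +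
      (2 * A)⁻¹ * ∑ I ∈ powersetCard κ univ, ∏ c, Φ #(proj π I c) := by
    intro π
    by_cases hπ : ∀ c y, wt π univ c y ≤ F
    · rw [if_neg (not_not.2 hπ), zero_add, ← div_eq_inv_mul, one_le_div (by positivity)]
      exact (hcon π hπ).le
    · rw [if_pos hπ]
      have : 0 ≤ ∑ I ∈ powersetCard κ univ, ∏ c, Φ #(proj π I c) :=
        Finset.sum_nonneg fun I _ => Finset.prod_nonneg fun c _ => hΦ _
      have : 0 ≤ (2 * A)⁻¹ * ∑ I ∈ powersetCard κ univ, ∏ c, Φ #(proj π I c) := by positivity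
      linarith
  have h2 := Finset.sum_le_sum fun π (_ : π ∈ (univ : Finset (Bool → V → M))) => h1 π
  rw [Finset.sum_add_distrib, ← Finset.mul_sum, Finset.sum_comm, Finset.sum_const,
    Finset.card_univ, ← Finset.sum_filter, Finset.sum_const] at h2
  simp only [nsmul_eq_mul, mul_one, Fintype.card_fun, Fintype.card_bool] at h2
  push_cast at h2
  have h3 := card_filter_not_wt_le (V := V) (M := M) F
  have h4 : ∑ I ∈ powersetCard κ (univ : Finset V), ∑ π : Bool → V → M, ∏ c, Φ #(proj π I c) ≤
      A * (Fintype.card M ^ Fintype.card V : ℝ) ^ 2 := by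
    refine (Finset.sum_le_sum fun I hI => (?_ : _ ≤ ((κ + 1) * B) ^ 2 *
      (Fintype.card M ^ Fintype.card V : ℝ) ^ 2)).trans ?_
    · have hIκ := (Finset.mem_powersetCard.1 hI).2
      rw [← hIκ] at hB ⊢
      exact sum_prod_card_proj_le I hΦ hB
    · rw [Finset.sum_const, Finset.card_powersetCard, Finset.card_univ, nsmul_eq_mul, ← mul_assoc]
      gcongr
  have h5 := mul_le_mul_of_nonneg_left h4 (show 0 ≤ (2 * A)⁻¹ by positivity)
  rw [← mul_assoc, show (2 * A)⁻¹ * A = 1 / 2 by field_simp] at h5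
  have h6 := mul_lt_mul_of_pos_right hF hpos
  linarith

end RandomMaps

section Assembly

variable {V M : Type*} [Fintype V] [DecidableEq V] [Nonempty V]
variable [Fintype M] [DecidableEq M]

theorem wt_mono (π : Bool → V → M) (I : Finset V) (c : Bool) (y : M) :
    wt π I c y ≤ wt π univ c y :=
  Finset.card_le_card (Finset.filter_subset_filter _ (Finset.subset_univ _))

/-- The contribution of one colour to the failure probability of a set of `κ` vertices whose
projection has `r` elements. -/
noncomputable def colourWeight (p z D : ℝ) (κ r : ℕ) : ℝ :=
  Real.exp (-(p * (1 - z) / 2) * (r * r - r) + p * D / 2 * (κ - r))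

/-- A choice of base graphs avoiding all unlikely events gives a graph without large independent
sets. -/
theorem cliqueFree_compl_twoBite {π : Bool → V → M} {S : Finset (Bool × Sym2 M)}
    {k κ s h F i q : ℕ} {D Δ : ℝ} {ρ : Finset V → Bool → M → V} (hρ : ∀ I, IsSection π I (ρ I))
    (hF : ∀ c y, wt π univ c y ≤ F) (hΔ : 2 * (h : ℝ) ≤ s * Δ) (hκ : κ + 2 * (s * F) ≤ k)
    (hheavy : ¬ HeavySpot π k s h S)
    (hinner : ¬ ∃ I ∈ powersetCard κ (univ : Finset V), ∃ j ∈ (univ : Finset (Bool × Bool)),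
      LowDegree π Δ I S ∧ 8 * i ≤ #(S ∩ innerPairs π I (ρ I) j.1 j.2 S))
    (hD : DegreeLE π D S) (hq : CodegreeLE q S)
    (hopen : ¬ ∃ I ∈ powersetCard κ (univ : Finset V), DegreeLE π D S ∧ CodegreeLE q S ∧
      #(S ∩ openPairs π I (ρ I) S) < 32 * i) :
    (twoBite π S)ᶜ.CliqueFree k := by
  intro I hI
  obtain ⟨J, hJI, hJ, hlow⟩ := exists_lowDegree_subset hF hheavy hΔ hκ hI.card_eq
  have hJmem : J ∈ powersetCard κ (univ : Finset V) :=
    Finset.mem_powersetCard.2 ⟨Finset.subset_univ _, hJ⟩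
  refine hopen ⟨J, hJmem, hD, hq, ?_⟩
  have hind : ∀ u ∈ J, ∀ v ∈ J, ¬ (twoBite π S).Adj u v := by
    intro u hu v hv huv
    have := hI.isClique (Finset.mem_coe.2 (hJI hu)) (Finset.mem_coe.2 (hJI hv)) huv.ne
    exact ((SimpleGraph.compl_adj _ _ _).1 this).2 huv
  have h1 := (Finset.card_le_card (inter_openPairs_subset (hρ J) hind)).trans
    Finset.card_biUnion_le
  refine h1.trans_lt ?_
  have h2 : ∀ j ∈ (univ : Finset (Bool × Bool)),
      #(S ∩ innerPairs π J (ρ J) j.1 j.2 S) < 8 * i := by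
    intro j hj
    by_contra! hc
    exact hinner ⟨J, hJmem, j, hj, hlow, hc⟩
  refine (Finset.sum_lt_sum_of_nonempty Finset.univ_nonempty h2).trans_le ?_
  rw [Finset.sum_const, Finset.card_univ]
  simp only [Fintype.card_prod, Fintype.card_bool, smul_eq_mul]
  omega

/-- The construction, for given values of the parameters. -/
theorem exists_graph [Nonempty M] {p W D d z η lam Δ t₁ t₂ A B : ℝ} {k κ s h F i q b n m : ℕ}
    (hn : Fintype.card V = n) (hm : Fintype.card M = m)
    (hp0 : 0 ≤ p) (hp1 : p ≤ 1) (hz0 : 0 < z) (hz1 : z ≤ 1) (hD : 0 ≤ D) (hF0 : 0 < F)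
    (hl0 : 0 ≤ lam) (hl : lam * F ≤ 1) (ht₁ : 1 ≤ t₁) (ht₂ : 1 ≤ t₂) (hΔ0 : 0 ≤ Δ)
    (hΔ : 2 * (h : ℝ) ≤ s * Δ) (hκ : κ + 2 * (s * F) ≤ k) (hd : p * (F * d) ^ 2 ≤ 1)
    (hb : k + b * b * (q * F) < b * W)
    (hη : η = 2 * p ^ 3 * k ^ 2 + Real.exp (p * W ^ 2 - d + p * Real.exp 1 * k) +
      Real.exp (p * Real.exp (p * D + 1) * k - W / F))
    (hB : ∀ r ≤ κ, m.choose r * ((r / m : ℝ) ^ κ * colourWeight p z D κ r) ≤ B)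
    (hA : 0 < A) (hAB : n.choose κ * ((κ + 1) * B) ^ 2 ≤ A)
    (hfibre : 2 * (m * (n.choose (F + 1) * (1 / m : ℝ) ^ (F + 1))) < 1 / 2)
    (hdegree : (2 * m) * (Real.exp (p * lam * (1 + lam * F) * n - lam * D)) < 1 / 5)
    (hcodegree : 2 * (m : ℝ) ^ 2 * (m * p ^ 2) ^ (q + 1) < 1 / 5)
    (hheavy : (n : ℝ) ^ k * (2 * (2 ^ k * (Real.exp (p * t₁ * (s * k)) / t₁ ^ h))) < 1 / 5)
    (hinner : (n.choose κ : ℝ) *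
      (4 * (2 ^ k * (Real.exp (p * t₂ * (k * (F * Δ) ^ 2)) / t₂ ^ i))) < 1 / 5)
    (hopen : z⁻¹ ^ (32 * i) * Real.exp (p * κ * F + p * D * (b * b * (q * F)) + η * (2 * m)) *
      (2 * A) < 1 / 5) :
    ∃ G : SimpleGraph V, G.CliqueFree 3 ∧ Gᶜ.CliqueFree k := by
  subst hn hm
  obtain ⟨π, hπF, hπ⟩ := exists_maps (V := V) (M := M) (Φ := colourWeight p z D κ)
    (fun r => (Real.exp_pos _).le) hB hA hAB hfibre
  choose ρ hρ using fun I => exists_isSection π I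
  set P₁ : Finset (Bool × Sym2 M) → Prop := fun S => ¬ DegreeLE π D S with hP₁
  set P₂ : Finset (Bool × Sym2 M) → Prop := fun S => ¬ CodegreeLE q S with hP₂
  set P₃ : Finset (Bool × Sym2 M) → Prop := HeavySpot π k s h with hP₃
  set P₄ : Finset (Bool × Sym2 M) → Prop := fun S => ∃ I ∈ powersetCard κ (univ : Finset V),
    ∃ j ∈ (univ : Finset (Bool × Bool)), LowDegree π Δ I S ∧
      8 * i ≤ #(S ∩ innerPairs π I (ρ I) j.1 j.2 S) with hP₄
  set P₅ : Finset (Bool × Sym2 M) → Prop := fun S => ∃ I ∈ powersetCard κ (univ : Finset V),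
    DegreeLE π D S ∧ CodegreeLE q S ∧ #(S ∩ openPairs π I (ρ I) S) < 32 * i with hP₅
  have h₁ : subsetProb p univ P₁ < 1 / 5 :=
    (subsetProb_not_degreeLE_le hp0 hp1 hl0 hl hπF).trans_lt hdegree
  have h₂ : subsetProb p univ P₂ < 1 / 5 :=
    (subsetProb_not_codegreeLE_le hp0 hp1).trans_lt hcodegree
  have h₃ : subsetProb p univ P₃ < 1 / 5 :=
    (subsetProb_heavySpot_le hp0 hp1 ht₁).trans_lt hheavy
  have hκk : κ ≤ k := by omega
  have h₄ : subsetProb p univ P₄ < 1 / 5 := by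
    refine (subsetProb_exists_le hp0 hp1 _ _ fun I hI => subsetProb_many_inner_le (hρ I) hF0
      (fun c y => (wt_mono π I c y).trans (hπF c y)) hp0 hp1 ht₂ hΔ0 (k := k) ?_).trans_lt ?_
    · rw [(Finset.mem_powersetCard.1 hI).2]
      exact hκk
    · rw [Finset.card_powersetCard, Finset.card_univ]
      exact hinner
  have h₅ : subsetProb p univ P₅ < 1 / 5 := by
    refine ((subsetProb_exists hp0 hp1 _ _).trans (Finset.sum_le_sum fun I hI =>
      (?_ : _ ≤ z⁻¹ ^ (32 * i) * Real.exp (p * κ * F + p * D * (b * b * (q * F)) +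
        η * (2 * Fintype.card M)) * ∏ c, colourWeight p z D κ #(proj π I c)))).trans_lt ?_
    · have hIκ := (Finset.mem_powersetCard.1 hI).2
      refine (subsetProb_good_few_open_le (hρ I) hp0 hp1 hz0 hz1 hD hF0
        (fun c y => (wt_mono π I c y).trans (hπF c y)) (k := k)
        (by rw [hIκ]; exact_mod_cast hκk) hd hb hη).trans (le_of_eq ?_)
      have hoff : ∀ T : Finset M, (#T.offDiag : ℝ) = #T * #T - #T := by
        intro T
        rw [Finset.offDiag_card, Nat.cast_sub (Nat.le_mul_self _), Nat.cast_mul]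
      simp only [colourWeight, Fintype.prod_bool, Fintype.sum_bool, hoff, hIκ]
      rw [mul_assoc (z⁻¹ ^ (32 * i)), ← Real.exp_add, ← Real.exp_add]
      congr 2
      ring
    · rw [← Finset.mul_sum]
      refine (mul_le_mul_of_nonneg_left hπ ?_).trans_lt hopen
      positivity
  have hall : subsetProb p univ (fun S => P₁ S ∨ P₂ S ∨ P₃ S ∨ P₄ S ∨ P₅ S) < 1 := by
    have e₁ := subsetProb_or (E := univ) hp0 hp1 P₁ (fun S => P₂ S ∨ P₃ S ∨ P₄ S ∨ P₅ S)
    have e₂ := subsetProb_or (E := univ) hp0 hp1 P₂ (fun S => P₃ S ∨ P₄ S ∨ P₅ S)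
    have e₃ := subsetProb_or (E := univ) hp0 hp1 P₃ (fun S => P₄ S ∨ P₅ S)
    have e₄ := subsetProb_or (E := univ) hp0 hp1 P₄ P₅
    linarith
  obtain ⟨S, -, hS⟩ := exists_not_of_subsetProb_lt_one hall
  simp only [not_or] at hS
  obtain ⟨n₁, n₂, n₃, n₄, n₅⟩ := hS
  exact ⟨twoBite π S, twoBite_cliqueFree π S, cliqueFree_compl_twoBite hρ hπF hΔ hκ n₃ n₄
    (not_not.1 n₁) (not_not.1 n₂) n₅⟩

end Assembly

section Parameters

/-- The relations between the parameters of the construction. -/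
structure Params (k n m F s b κ : ℕ) (y L p : ℝ) : Prop where
  exp_L : Real.exp L = k
  exp_y : Real.exp (L / 50) = y
  le_L : 10 ^ 6 ≤ L
  pow_L_le : L ^ 10 ≤ y
  log_L_le : 10 ^ 7 * Real.log L ≤ L
  p_eq : p = 1.2 * L / y ^ 50
  n_le : 3 * L * n ≤ y ^ 100
  le_m : y ^ 99 ≤ m
  m_le : m ≤ 2 * y ^ 99
  le_F : y ≤ F
  F_le : F ≤ 2 * y
  le_s : 20 * y ^ 30 ≤ s
  s_le : s ≤ 21 * y ^ 30
  le_b : y ^ 22 ≤ b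
  b_le : b ≤ 2 * y ^ 22
  κ_add : κ + 2 * (s * F) = k

namespace Params

variable {k n m F s b κ : ℕ} {y L p : ℝ}

theorem L_pos (H : Params k n m F s b κ y L p) : 0 < L := by
  have := H.le_L
  linarith

theorem y_pos (H : Params k n m F s b κ y L p) : 0 < y := by
  rw [← H.exp_y]
  exact Real.exp_pos _

theorem L_le_y (H : Params k n m F s b κ y L p) : L ≤ y := by
  have h1 : 1 ≤ L := by linarith [H.le_L]
  exact (le_self_pow₀ h1 (by norm_num)).trans H.pow_L_le

theorem le_y (H : Params k n m F s b κ y L p) : 10 ^ 6 ≤ y := H.le_L.trans H.L_le_y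

theorem mul_le (H : Params k n m F s b κ y L p) (C : ℝ) (a i j : ℕ) (hC : C ≤ 10 ^ 6 := by norm_num)
    (ha : a ≤ 9 := by norm_num) (hij : i + 1 ≤ j := by norm_num) : C * L ^ a * y ^ i ≤ y ^ j := by
  have hL := H.le_L
  have hL0 := H.L_pos
  have hy0 := H.y_pos
  have hy := H.le_y
  have hL1 : 1 ≤ L := by linarith
  have hy1 : 1 ≤ y := by linarith
  calc C * L ^ a * y ^ i ≤ L * L ^ 9 * y ^ i := by
        have : C ≤ L := hC.trans hL
        gcongr
    _ = L ^ 10 * y ^ i := by ring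
    _ ≤ y * y ^ i := by
        have := H.pow_L_le
        gcongr
    _ = y ^ (i + 1) := by ring
    _ ≤ y ^ j := pow_le_pow_right₀ hy1 hij

theorem k_eq (H : Params k n m F s b κ y L p) : (k : ℝ) = y ^ 50 := by
  rw [← H.exp_L, ← H.exp_y, ← Real.exp_nat_mul]
  congr 1
  push_cast
  ring

theorem pow_y (H : Params k n m F s b κ y L p) (i : ℕ) : y ^ i = Real.exp (i / 50 * L) := by
  rw [← H.exp_y, ← Real.exp_nat_mul]
  congr 1
  ring

theorem p_pos (H : Params k n m F s b κ y L p) : 0 < p := by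
  have := H.L_pos
  have := H.y_pos
  rw [H.p_eq]
  positivity

theorem p_mul (H : Params k n m F s b κ y L p) : p * y ^ 50 = 1.2 * L := by
  have := H.y_pos
  rw [H.p_eq]
  field_simp

theorem p_le_one (H : Params k n m F s b κ y L p) : p ≤ 1 := by
  have h1 := H.mul_le 1.2 1 0 50
  have := H.y_pos
  rw [H.p_eq, div_le_one (by positivity)]
  linarith

theorem F_pos (H : Params k n m F s b κ y L p) : 0 < F := by
  have h1 := H.y_pos
  have h2 := H.le_F
  exact_mod_cast h1.trans_le h2

theorem m_pos (H : Params k n m F s b κ y L p) : (0 : ℝ) < m := by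
  have := H.y_pos
  exact lt_of_lt_of_le (by positivity) H.le_m

/-- Polynomial factors are negligible compared with the exponential of a power. -/
theorem m_mul_exp_le (H : Params k n m F s b κ y L p) {e : ℝ} (he : e ≤ -(3 * L)) :
    2 * (m : ℝ) * Real.exp e ≤ 1 / 100 := by
  have hL := H.le_L
  have h1 : 2 * (m : ℝ) ≤ 4 * Real.exp (2 * L) := by
    have h2 := H.m_le
    rw [H.pow_y 99] at h2
    have h3 : Real.exp ((99 : ℕ) / 50 * L) ≤ Real.exp (2 * L) := by
      apply Real.exp_le_exp.2
      push_cast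
      linarith
    linarith
  calc 2 * (m : ℝ) * Real.exp e ≤ 4 * Real.exp (2 * L) * Real.exp (-(3 * L)) := by
        gcongr
    _ = 4 * Real.exp (-L) := by
        rw [mul_assoc, ← Real.exp_add]
        congr 2
        ring
    _ ≤ 4 * (1 / 400) := by
        have h2 := Real.add_one_le_exp L
        rw [Real.exp_neg]
        have h3 : (Real.exp L)⁻¹ ≤ 1 / 400 := by
          rw [inv_le_comm₀ (Real.exp_pos _) (by norm_num)]
          linarith
        linarith
    _ = 1 / 100 := by norm_num

theorem degree_le (H : Params k n m F s b κ y L p) :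
    (2 * m) * (Real.exp (p * (0.01 / F) * (1 + 0.01 / F * F) * n - 0.01 / F * (0.41 * y ^ 50))) <
      1 / 5 := by
  refine (H.m_mul_exp_le ?_).trans_lt (by norm_num)
  have hF : (0 : ℝ) < F := by exact_mod_cast H.F_pos
  have hy := H.y_pos
  have hpn : p * n ≤ 0.4 * y ^ 50 := by
    have h1 := H.n_le
    rw [H.p_eq, div_mul_eq_mul_div, div_le_iff₀ (by positivity)]
    calc 1.2 * L * n = 0.4 * (3 * L * n) := by ring
      _ ≤ 0.4 * y ^ 100 := by gcongr
      _ = _ := by ring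
  have e : p * (0.01 / F) * (1 + 0.01 / F * F) * n - 0.01 / F * (0.41 * y ^ 50) =
      0.01 / F * (1.01 * (p * n) - 0.41 * y ^ 50) := by
    field_simp
    ring
  rw [e, div_mul_eq_mul_div, div_le_iff₀ hF]
  have h2 := H.mul_le 200000 1 1 50
  have h3 := H.F_le
  have h4 : 3 * L * F ≤ 3 * L * (2 * y) := by
    have := H.L_pos
    gcongr
  have h5 : 0 < y ^ 50 := by positivity
  rw [pow_one, pow_one] at h2
  linarith

theorem codegree_le (H : Params k n m F s b κ y L p) :
    2 * (m : ℝ) ^ 2 * (m * p ^ 2) ^ (401 + 1) < 1 / 5 := by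
  have hy := H.y_pos
  have hm := H.m_pos
  have hp := H.p_pos
  have hL := H.L_pos
  have h1 : m * p ^ 2 ≤ 2.88 * L ^ 2 / y := by
    rw [le_div_iff₀ hy]
    calc m * p ^ 2 * y ≤ 2 * y ^ 99 * p ^ 2 * y := by
          have := H.m_le
          gcongr
      _ = 2 * (p * y ^ 50) ^ 2 := by ring
      _ = 2.88 * L ^ 2 := by rw [H.p_mul]; ring
  have h2 : (m * p ^ 2) ^ 2 ≤ 1 / y := by
    calc (m * p ^ 2) ^ 2 ≤ (2.88 * L ^ 2 / y) ^ 2 := by gcongr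
      _ = (2.88 ^ 2 * L ^ 4 * y ^ 0) / y / y := by ring
      _ ≤ y ^ 1 / y / y := by
          have := H.mul_le (2.88 ^ 2) 4 0 1
          gcongr
      _ = 1 / y := by field_simp
  have h3 : (m * p ^ 2) ^ (401 + 1) ≤ (1 / y) ^ 201 := by
    calc (m * p ^ 2) ^ (401 + 1) = ((m * p ^ 2) ^ 2) ^ 201 := by rw [← pow_mul]
      _ ≤ _ := by gcongr
  calc 2 * (m : ℝ) ^ 2 * (m * p ^ 2) ^ (401 + 1) ≤ 2 * (2 * y ^ 99) ^ 2 * (1 / y) ^ 201 := by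
        have := H.m_le
        gcongr
    _ = 8 / y ^ 3 := by
        field_simp
        norm_num
    _ < 1 / 5 := by
        rw [div_lt_div_iff₀ (by positivity) (by norm_num)]
        have h4 := H.mul_le 1 0 2 3
        have h5 := H.mul_le 100 0 0 2
        linarith

theorem fibre_le (H : Params k n m F s b κ y L p) :
    2 * (m * (n.choose (F + 1) * (1 / m : ℝ) ^ (F + 1))) < 1 / 2 := by
  have hy := H.y_pos
  have hm := H.m_pos
  have hL := H.L_pos
  have h1 : (n.choose (F + 1) : ℝ) * (1 / m : ℝ) ^ (F + 1) ≤ Real.exp (-(F + 1 : ℝ)) := by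
    have hf := Real.pow_div_factorial_le_exp ((F + 1 : ℕ) : ℝ) (Nat.cast_nonneg _) (F + 1)
    have hr : (n / m : ℝ) ≤ (F + 1 : ℕ) * Real.exp (-2) := by
      rw [div_le_iff₀ hm]
      have h2 := H.n_le
      have h3 : (n : ℝ) ≤ y ^ 100 / L / 3 := by
        rw [le_div_iff₀ (by norm_num), le_div_iff₀ hL]
        linarith
      have h4 : Real.exp 2 ≤ L := by
        have e1 := Real.exp_one_lt_d9
        have e2 : Real.exp 2 = Real.exp 1 ^ 2 := by rw [← Real.exp_nat_mul]; norm_num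
        have e3 := Real.exp_pos 1
        have := H.le_L
        rw [e2]
        nlinarith
      have h5 : y ^ 100 / L ≤ y ^ 100 * Real.exp (-2) := by
        rw [Real.exp_neg, ← div_eq_mul_inv]
        gcongr
      have h6 : y ^ 100 * Real.exp (-2) ≤ (F + 1 : ℕ) * Real.exp (-2) * m := by
        have h7 : y * y ^ 99 ≤ (F + 1 : ℕ) * m := by
          have := H.le_F
          have := H.le_m
          push_cast
          gcongr
          linarith
        nlinarith [Real.exp_pos (-2)]
      have h8 : 0 ≤ y ^ 100 / L := by positivity
      linarith
    calc (n.choose (F + 1) : ℝ) * (1 / m : ℝ) ^ (F + 1)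
        ≤ n ^ (F + 1) / (F + 1).factorial * (1 / m : ℝ) ^ (F + 1) := by
          gcongr
          exact Nat.choose_le_pow_div _ _
      _ = (n / m : ℝ) ^ (F + 1) / (F + 1).factorial := by
          rw [div_pow, div_pow]
          ring
      _ ≤ ((F + 1 : ℕ) * Real.exp (-2)) ^ (F + 1) / (F + 1).factorial := by gcongr
      _ = ((F + 1 : ℕ) : ℝ) ^ (F + 1) / (F + 1).factorial * Real.exp (-2 * (F + 1)) := by
          rw [mul_pow, ← Real.exp_nat_mul]
          push_cast
          rw [show (F + 1 : ℝ) * -2 = -2 * (F + 1) by ring]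
          ring
      _ ≤ Real.exp ((F + 1 : ℕ) : ℝ) * Real.exp (-2 * (F + 1)) := by gcongr
      _ = Real.exp (-(F + 1 : ℝ)) := by
          rw [← Real.exp_add]
          congr 1
          push_cast
          ring
  have h2 : 2 * (m : ℝ) * Real.exp (-(F + 1 : ℝ)) ≤ 1 / 100 := by
    refine H.m_mul_exp_le ?_
    have h3 := H.mul_le 3 1 0 1
    have h4 := H.le_F
    linarith
  nlinarith

theorem n_le_exp (H : Params k n m F s b κ y L p) : (n : ℝ) ≤ Real.exp (2 * L) := by
  have h1 : Real.exp (2 * L) = y ^ 100 := by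
    rw [H.pow_y]
    norm_num
  rw [h1]
  refine le_trans ?_ H.n_le
  have := H.le_L
  exact le_mul_of_one_le_left (Nat.cast_nonneg _) (by linarith)

theorem two_pow_le (k : ℕ) : (2 : ℝ) ^ k ≤ Real.exp k := by
  rw [← Real.exp_one_pow k]
  have := Real.add_one_le_exp (1 : ℝ)
  gcongr
  linarith

theorem heavy_le (H : Params k n m F s b κ y L p) :
    (n : ℝ) ^ k * (2 * (2 ^ k * (Real.exp (p * y ^ 17 * (s * k)) / (y ^ 17) ^ (10 * k)))) <
      1 / 5 := by
  have hy := H.y_pos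
  have hL := H.le_L
  have hp := H.p_pos
  have h1 : (n : ℝ) ^ k ≤ Real.exp (k * (2 * L)) := by
    rw [Real.exp_nat_mul]
    have := H.n_le_exp
    gcongr
  have h2 : (y ^ 17) ^ (10 * k) = Real.exp (3.4 * L * k) := by
    rw [H.pow_y, ← Real.exp_nat_mul]
    congr 1
    push_cast
    ring
  have h3 : p * y ^ 17 * (s * k) ≤ k := by
    rw [H.k_eq]
    calc p * y ^ 17 * (s * y ^ 50) ≤ p * y ^ 17 * (21 * y ^ 30 * y ^ 50) := by
          have := H.s_le
          gcongr
      _ = p * y ^ 50 * (21 * y ^ 47) := by ring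
      _ = 25.2 * L ^ 1 * y ^ 47 := by rw [H.p_mul]; ring
      _ ≤ y ^ 50 := H.mul_le 25.2 1 47 50
  calc (n : ℝ) ^ k * (2 * (2 ^ k * (Real.exp (p * y ^ 17 * (s * k)) / (y ^ 17) ^ (10 * k))))
      ≤ Real.exp (k * (2 * L)) * (2 * (Real.exp k * (Real.exp k / Real.exp (3.4 * L * k)))) := by
        rw [h2]
        have := two_pow_le k
        gcongr
    _ = 2 * Real.exp (-(k * (1.4 * L - 2))) := by
        rw [← Real.exp_sub, ← Real.exp_add, mul_left_comm, ← Real.exp_add]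
        congr 2
        ring
    _ ≤ 2 * Real.exp (-(9 : ℝ)) := by
        have hk : (1 : ℝ) ≤ k := by
          rw [H.k_eq]
          exact one_le_pow₀ (by linarith [H.le_y])
        gcongr
        nlinarith
    _ < 1 / 5 := by
        rw [Real.exp_neg]
        have h5 : (Real.exp 9)⁻¹ < 1 / 10 := by
          rw [inv_lt_comm₀ (Real.exp_pos _) (by norm_num)]
          have := Real.add_one_lt_exp (show (9 : ℝ) ≠ 0 by norm_num)
          linarith
        linarith

theorem κ_le (H : Params k n m F s b κ y L p) : κ ≤ k := by
  have := H.κ_add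
  omega

theorem inner_le (H : Params k n m F s b κ y L p) :
    (n.choose κ : ℝ) * (4 * (2 ^ k * (Real.exp (p * y ^ 5 * (k * (F * y ^ 20) ^ 2)) /
      (y ^ 5) ^ (50 * k)))) < 1 / 5 := by
  have hy := H.y_pos
  have hL := H.le_L
  have hp := H.p_pos
  have h1 : (n.choose κ : ℝ) ≤ Real.exp (k * (2 * L)) := by
    calc (n.choose κ : ℝ) ≤ (n : ℝ) ^ κ := by exact_mod_cast Nat.choose_le_pow _ _
      _ ≤ Real.exp (2 * L) ^ κ := by
          have := H.n_le_exp
          gcongr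
      _ = Real.exp (κ * (2 * L)) := by rw [Real.exp_nat_mul]
      _ ≤ Real.exp (k * (2 * L)) := by
          have := H.κ_le
          gcongr
  have h2 : (y ^ 5) ^ (50 * k) = Real.exp (5 * L * k) := by
    rw [H.pow_y, ← Real.exp_nat_mul]
    congr 1
    push_cast
    ring
  have h3 : p * y ^ 5 * (k * (F * y ^ 20) ^ 2) ≤ k := by
    rw [H.k_eq]
    calc p * y ^ 5 * (y ^ 50 * (F * y ^ 20) ^ 2) ≤ p * y ^ 5 * (y ^ 50 * (2 * y * y ^ 20) ^ 2) := by
          have := H.F_le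
          gcongr
      _ = p * y ^ 50 * (4 * y ^ 47) := by ring
      _ = 4.8 * L ^ 1 * y ^ 47 := by rw [H.p_mul]; ring
      _ ≤ y ^ 50 := H.mul_le 4.8 1 47 50
  calc (n.choose κ : ℝ) * (4 * (2 ^ k * (Real.exp (p * y ^ 5 * (k * (F * y ^ 20) ^ 2)) /
      (y ^ 5) ^ (50 * k))))
      ≤ Real.exp (k * (2 * L)) * (4 * (Real.exp k * (Real.exp k / Real.exp (5 * L * k)))) := by
        rw [h2]
        have := two_pow_le k
        gcongr
    _ = 4 * Real.exp (-(k * (3 * L - 2))) := by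
        rw [← Real.exp_sub, ← Real.exp_add, mul_left_comm, ← Real.exp_add]
        congr 2
        ring
    _ ≤ 4 * Real.exp (-(30 : ℝ)) := by
        have hk : (1 : ℝ) ≤ k := by
          rw [H.k_eq]
          exact one_le_pow₀ (by linarith [H.le_y])
        gcongr
        nlinarith
    _ < 1 / 5 := by
        rw [Real.exp_neg]
        have h5 : (Real.exp 30)⁻¹ < 1 / 20 := by
          rw [inv_lt_comm₀ (Real.exp_pos _) (by norm_num)]
          have := Real.add_one_lt_exp (show (30 : ℝ) ≠ 0 by norm_num)
          linarith
        linarith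

theorem eta_mul_le (H : Params k n m F s b κ y L p) :
    (2 * p ^ 3 * k ^ 2 + Real.exp (p * (y ^ 30) ^ 2 - y ^ 15 + p * Real.exp 1 * k) +
      Real.exp (p * Real.exp (p * (0.41 * y ^ 50) + 1) * k - y ^ 30 / F)) * (2 * m) ≤ y ^ 50 := by
  have hy := H.y_pos
  have hL := H.L_pos
  have hp := H.p_pos
  have hm := H.m_pos
  have hF : (0 : ℝ) < F := by exact_mod_cast H.F_pos
  have he := Real.exp_one_lt_d9
  have h1 : 2 * p ^ 3 * k ^ 2 * (2 * m) ≤ y ^ 50 / 2 := by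
    rw [H.k_eq]
    calc 2 * p ^ 3 * (y ^ 50) ^ 2 * (2 * m) ≤ 2 * p ^ 3 * (y ^ 50) ^ 2 * (2 * (2 * y ^ 99)) := by
          have := H.m_le
          gcongr
      _ = 8 * (p * y ^ 50) ^ 3 * y ^ 49 := by ring
      _ = (27.648 * L ^ 3 * y ^ 49) / 2 := by rw [H.p_mul]; ring
      _ ≤ y ^ 50 / 2 := by
          have := H.mul_le 27.648 3 49 50
          linarith
  have hpk : p * k = 1.2 * L := by rw [H.k_eq, H.p_mul]
  have h2 : 2 * (m : ℝ) * Real.exp (p * (y ^ 30) ^ 2 - y ^ 15 + p * Real.exp 1 * k) ≤ 1 / 100 := by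
    refine H.m_mul_exp_le ?_
    have e1 : p * (y ^ 30) ^ 2 = 1.2 * L * y ^ 10 := by
      rw [← H.p_mul]
      ring
    have e2 : p * Real.exp 1 * k ≤ 3.6 * L := by
      calc p * Real.exp 1 * k = 1.2 * L * Real.exp 1 := by rw [← hpk]; ring
        _ ≤ 1.2 * L * 3 := by gcongr; linarith
        _ = _ := by ring
    have e3 := H.mul_le 2.4 1 10 15
    have e4 := H.mul_le 100 1 0 15
    rw [e1]
    linarith
  have h3 : 2 * (m : ℝ) * Real.exp (p * Real.exp (p * (0.41 * y ^ 50) + 1) * k - y ^ 30 / F) ≤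
      1 / 100 := by
    refine H.m_mul_exp_le ?_
    have e1 : Real.exp (p * (0.41 * y ^ 50) + 1) ≤ 3 * y ^ 25 := by
      rw [Real.exp_add, mul_comm]
      refine mul_le_mul (by linarith) ?_ (Real.exp_pos _).le (by norm_num)
      rw [H.pow_y 25, mul_left_comm, H.p_mul]
      apply Real.exp_le_exp.2
      push_cast
      linarith
    have e2 : p * Real.exp (p * (0.41 * y ^ 50) + 1) * k ≤ 3.6 * L * y ^ 25 := by
      calc p * Real.exp (p * (0.41 * y ^ 50) + 1) * k ≤ p * (3 * y ^ 25) * k := by gcongr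
        _ = p * k * (3 * y ^ 25) := by ring
        _ = _ := by rw [hpk]; ring
    have e3 : y ^ 29 / 2 ≤ y ^ 30 / F := by
      rw [div_le_div_iff₀ (by norm_num) hF]
      calc y ^ 29 * F ≤ y ^ 29 * (2 * y) := by
            have := H.F_le
            gcongr
        _ = y ^ 30 * 2 := by ring
    have e4 := H.mul_le 20 1 25 29
    have e5 := H.mul_le 100 1 0 29
    linarith
  have h4 := H.mul_le 1 0 0 50
  have h5 := H.mul_le 100 0 0 50
  linarith

theorem b_bound (H : Params k n m F s b κ y L p) :
    (k : ℝ) + b * b * ((401 : ℕ) * F) < b * y ^ 30 := by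
  have hy := H.y_pos
  have hb : (0 : ℝ) < b := lt_of_lt_of_le (by positivity) H.le_b
  have h1 : (b : ℝ) * ((401 : ℕ) * F) ≤ y ^ 30 / 2 := by
    calc (b : ℝ) * ((401 : ℕ) * F) ≤ 2 * y ^ 22 * ((401 : ℕ) * (2 * y)) := by
          have := H.b_le
          have := H.F_le
          gcongr
      _ = (3208 * L ^ 0 * y ^ 23) / 2 := by push_cast; ring
      _ ≤ y ^ 30 / 2 := by
          have := H.mul_le 3208 0 23 30
          gcongr
  have h2 : (k : ℝ) < b * (y ^ 30 / 2) := by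
    rw [H.k_eq]
    have h3 := H.mul_le 4 0 50 52
    have h4 : y ^ 22 * (y ^ 30 / 2) ≤ b * (y ^ 30 / 2) := by
      have := H.le_b
      gcongr
    have h5 : 0 < y ^ 50 := by positivity
    nlinarith
  have h6 := mul_le_mul_of_nonneg_left h1 hb.le
  calc (k : ℝ) + b * b * ((401 : ℕ) * F) = k + b * (b * ((401 : ℕ) * F)) := by ring
    _ < b * (y ^ 30 / 2) + b * (y ^ 30 / 2) := add_lt_add_of_lt_of_le h2 h6
    _ = b * y ^ 30 := by ring

theorem κ_bound (H : Params k n m F s b κ y L p) : y ^ 50 - 84 * y ^ 31 ≤ κ := by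
  have hy := H.y_pos
  have h1 : (κ : ℝ) + 2 * (s * F) = k := by exact_mod_cast H.κ_add
  have h2 : (s : ℝ) * F ≤ 21 * y ^ 30 * (2 * y) := by
    have := H.s_le
    have := H.F_le
    gcongr
  rw [H.k_eq] at h1
  linarith

theorem choose_mul_pow_le {m r κ : ℕ} (hm : 0 < m) (hr : r ≤ κ) :
    (m.choose r : ℝ) * (r / m : ℝ) ^ κ ≤ Real.exp r * (r / m : ℝ) ^ (κ - r) := by
  have hm' : (0 : ℝ) < m := by exact_mod_cast hm
  calc (m.choose r : ℝ) * (r / m : ℝ) ^ κ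
      ≤ (m : ℝ) ^ r / r.factorial * (r / m : ℝ) ^ κ := by
        gcongr
        exact Nat.choose_le_pow_div _ _
    _ = (r : ℝ) ^ r / r.factorial * (r / m : ℝ) ^ (κ - r) := by
        rw [← Nat.add_sub_cancel' hr, pow_add, Nat.add_sub_cancel' hr, div_pow (r : ℝ) m r]
        field_simp
    _ ≤ _ := by
        gcongr
        exact Real.pow_div_factorial_le_exp _ (Nat.cast_nonneg _) _

theorem colour_le (H : Params k n m F s b κ y L p) (r : ℕ) (hr : r ≤ κ) :
    (m.choose r : ℝ) * ((r / m : ℝ) ^ κ * colourWeight p (1 / L) (0.41 * y ^ 50) κ r) ≤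
      Real.exp (-(0.508 * (L * y ^ 50))) := by
  have hy := H.y_pos
  have hL := H.L_pos
  have hp := H.p_pos
  have hm := H.m_pos
  have hrk : (r : ℝ) ≤ y ^ 50 := by
    rw [← H.k_eq]
    exact_mod_cast hr.trans H.κ_le
  have hr0 : (0 : ℝ) ≤ r := Nat.cast_nonneg r
  have h1 : (r / m : ℝ) ≤ Real.exp (-(0.98 * L)) := by
    rw [Real.exp_neg, show 0.98 * L = ((49 : ℕ) : ℝ) / 50 * L by norm_num, ← H.pow_y]
    calc (r / m : ℝ) ≤ y ^ 50 / y ^ 99 := by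
          have := H.le_m
          gcongr
      _ = (y ^ 49)⁻¹ := by field_simp
  have h2 : (r / m : ℝ) ^ (κ - r) ≤ Real.exp (-(0.98 * L) * (κ - r)) := by
    rw [mul_comm, ← Nat.cast_sub hr, Real.exp_nat_mul]
    gcongr
  have h3 := choose_mul_pow_le (m := m) (by exact_mod_cast hm) hr
  rw [← mul_assoc, colourWeight]
  refine (mul_le_mul_of_nonneg_right (h3.trans (mul_le_mul_of_nonneg_left h2
    (Real.exp_pos _).le)) (Real.exp_pos _).le).trans ?_
  rw [← Real.exp_add, ← Real.exp_add]
  apply Real.exp_le_exp.2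
  have hpX := H.p_mul
  have e1 : 0.6 * L * (367 / 300 * r - (367 / 600) ^ 2 * y ^ 50) ≤ p / 2 * r ^ 2 := by
    rw [show 0.6 * L = p * y ^ 50 / 2 by rw [hpX]; ring]
    have : 0 ≤ p * (r - 367 / 600 * y ^ 50) ^ 2 := by positivity
    nlinarith
  have e2 : p * (1 / L) / 2 * r ^ 2 ≤ 0.6 * y ^ 50 := by
    calc p * (1 / L) / 2 * r ^ 2 ≤ p * (1 / L) / 2 * (y ^ 50) ^ 2 := by gcongr
      _ = (p * y ^ 50) * (1 / L) / 2 * y ^ 50 := by ring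
      _ = 0.6 * y ^ 50 := by
          rw [hpX]
          field_simp
          norm_num
  have e3 : p / 2 * r ≤ 0.6 * L := by
    calc p / 2 * r ≤ p / 2 * y ^ 50 := by gcongr
      _ = 0.6 * L := by rw [div_mul_eq_mul_div, hpX]; ring
  have e4 : 0 ≤ p * (1 / L) / 2 * r := by positivity
  have e5 : p * (0.41 * y ^ 50) / 2 = 0.246 * L := by
    rw [mul_left_comm, hpX]
    ring
  rw [e5]
  have e6 := H.κ_bound
  have e7 : L * (y ^ 50 - 84 * y ^ 31) ≤ L * κ := by gcongr
  have e8 := H.mul_le 100 1 31 32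
  have e9 := H.mul_le 1000 0 32 50
  have e10 := H.mul_le 1000 1 0 50
  have e11 : 10 ^ 6 * y ^ 50 ≤ L * y ^ 50 := by
    have := H.le_L
    gcongr
  have e12 := H.mul_le 100 1 31 50
  have e13 : 0 < y ^ 50 := by positivity
  have e14 : -(p * (1 - 1 / L) / 2) * (r * r - r : ℝ) = -(p / 2 * r ^ 2) + p / 2 * r +
      p * (1 / L) / 2 * r ^ 2 - p * (1 / L) / 2 * r := by ring
  rw [e14]
  linarith

theorem choose_le (H : Params k n m F s b κ y L p) :
    (n.choose κ : ℝ) ≤ Real.exp (L * y ^ 50) := by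
  have hy := H.y_pos
  have hL := H.L_pos
  have h1 := H.κ_bound
  have h2 := H.mul_le 168 0 31 50
  have hy50 : 0 < y ^ 50 := by positivity
  have hκ : y ^ 50 / 2 ≤ κ := by linarith
  have hκ0 : (0 : ℝ) < κ := by linarith
  have he := Real.exp_one_lt_d9
  have h3 : (n : ℝ) ≤ κ * (y ^ 50 * Real.exp (-1)) := by
    have h4 := H.n_le
    have h5 : (n : ℝ) * (3 * 6) ≤ n * (3 * L) := by
      have := H.le_L
      gcongr
      linarith
    have h6 : 1 / 3 ≤ Real.exp (-1) := by
      rw [Real.exp_neg, ← one_div]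
      exact one_div_le_one_div_of_le (Real.exp_pos _) (by linarith)
    have h7 : y ^ 50 / 2 * (y ^ 50 * (1 / 3)) ≤ κ * (y ^ 50 * Real.exp (-1)) := by gcongr
    nlinarith
  calc (n.choose κ : ℝ) ≤ (n : ℝ) ^ κ / κ.factorial := Nat.choose_le_pow_div _ _
    _ ≤ (κ * (y ^ 50 * Real.exp (-1))) ^ κ / κ.factorial := by gcongr
    _ = (κ : ℝ) ^ κ / κ.factorial * ((y ^ 50) ^ κ * Real.exp (-1) ^ κ) := by
        rw [mul_pow, mul_pow]
        ring
    _ ≤ Real.exp κ * ((y ^ 50) ^ κ * Real.exp (-1) ^ κ) := by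
        gcongr
        exact Real.pow_div_factorial_le_exp _ (Nat.cast_nonneg _) _
    _ = Real.exp (L * κ) := by
        rw [H.pow_y, ← Real.exp_nat_mul, ← Real.exp_nat_mul, ← Real.exp_add, ← Real.exp_add]
        congr 1
        push_cast
        ring
    _ ≤ Real.exp (L * y ^ 50) := by
        rw [← H.k_eq]
        have := H.κ_le
        gcongr

theorem average_le (H : Params k n m F s b κ y L p) :
    (n.choose κ : ℝ) * ((κ + 1) * Real.exp (-(0.508 * (L * y ^ 50)))) ^ 2 ≤
      Real.exp (-(0.015 * (L * y ^ 50))) := by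
  have hy := H.y_pos
  have h1 : (κ + 1 : ℝ) ≤ Real.exp (y ^ 50) := by
    have h2 := Real.add_one_le_exp (y ^ 50)
    have h3 : (κ : ℝ) ≤ y ^ 50 := by
      rw [← H.k_eq]
      exact_mod_cast H.κ_le
    linarith
  calc (n.choose κ : ℝ) * ((κ + 1) * Real.exp (-(0.508 * (L * y ^ 50)))) ^ 2
      ≤ Real.exp (L * y ^ 50) *
        (Real.exp (y ^ 50) * Real.exp (-(0.508 * (L * y ^ 50)))) ^ 2 := by
        have := H.choose_le
        gcongr
    _ = Real.exp (2 * y ^ 50 - 0.016 * (L * y ^ 50)) := by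
        rw [← Real.exp_add, ← Real.exp_nat_mul, ← Real.exp_add]
        congr 1
        push_cast
        ring
    _ ≤ _ := by
        apply Real.exp_le_exp.2
        have e11 : 10 ^ 6 * y ^ 50 ≤ L * y ^ 50 := by
          have := H.le_L
          gcongr
        have e13 : 0 < y ^ 50 := by positivity
        linarith

theorem open_le (H : Params k n m F s b κ y L p) {η : ℝ} (hη : η * (2 * m) ≤ y ^ 50) :
    (1 / L)⁻¹ ^ (32 * (50 * k)) * Real.exp (p * κ * F +
      p * (0.41 * y ^ 50) * (b * b * ((401 : ℕ) * F)) + η * (2 * m)) *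
      (2 * Real.exp (-(0.015 * (L * y ^ 50)))) < 1 / 5 := by
  have hy := H.y_pos
  have hL := H.L_pos
  have hp := H.p_pos
  have hpX := H.p_mul
  have h1 : (1 / L)⁻¹ ^ (32 * (50 * k)) = Real.exp (1600 * Real.log L * y ^ 50) := by
    rw [one_div, inv_inv, ← H.k_eq]
    nth_rewrite 1 [← Real.exp_log hL]
    rw [← Real.exp_nat_mul]
    congr 1
    push_cast
    ring
  have h2 : 1600 * Real.log L * y ^ 50 ≤ 0.001 * (L * y ^ 50) := by
    have := H.log_L_le
    have : 1600 * Real.log L ≤ 0.001 * L := by linarith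
    rw [← mul_assoc]
    gcongr
  have h3 : p * κ * F ≤ 2.4 * L ^ 1 * y ^ 1 := by
    calc p * κ * F ≤ p * y ^ 50 * (2 * y) := by
          have h4 : (κ : ℝ) ≤ y ^ 50 := by
            rw [← H.k_eq]
            exact_mod_cast H.κ_le
          have := H.F_le
          gcongr
      _ = 2.4 * L ^ 1 * y ^ 1 := by rw [hpX]; ring
  have h5 : p * (0.41 * y ^ 50) * (b * b * ((401 : ℕ) * F)) ≤ 1600 * L ^ 1 * y ^ 45 := by
    calc p * (0.41 * y ^ 50) * (b * b * ((401 : ℕ) * F))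
        ≤ p * (0.41 * y ^ 50) * (2 * y ^ 22 * (2 * y ^ 22) * ((401 : ℕ) * (2 * y))) := by
          have := H.F_le
          have := H.b_le
          gcongr
      _ = p * y ^ 50 * (1315.28 * y ^ 45) := by push_cast; ring
      _ = 1578.336 * (L * y ^ 45) := by rw [hpX]; ring
      _ ≤ 1600 * (L * y ^ 45) := by
          have : 0 ≤ L * y ^ 45 := by positivity
          linarith
      _ = _ := by ring
  have e11 : 10 ^ 6 * y ^ 50 ≤ L * y ^ 50 := by
    have := H.le_L
    gcongr
  have e13 : 1 ≤ y ^ 50 := one_le_pow₀ (by linarith [H.le_y])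
  have e14 := H.mul_le 2.4 1 1 50
  have e15 := H.mul_le 1600 1 45 50
  rw [h1, mul_left_comm, ← Real.exp_add, ← Real.exp_add]
  have h6 : 1600 * Real.log L * y ^ 50 + (p * κ * F +
      p * (0.41 * y ^ 50) * (b * b * ((401 : ℕ) * F)) + η * (2 * m)) +
      -(0.015 * (L * y ^ 50)) ≤ -9 := by linarith
  have h7 : Real.exp (-9) < 1 / 10 := by
    rw [Real.exp_neg, inv_lt_comm₀ (Real.exp_pos _) (by norm_num)]
    have := Real.add_one_lt_exp (show (9 : ℝ) ≠ 0 by norm_num)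
    linarith
  have h8 := Real.exp_le_exp.2 h6
  linarith

theorem exists_graph (H : Params k n m F s b κ y L p) (hn : 0 < n) :
    ∃ G : SimpleGraph (Fin n), G.CliqueFree 3 ∧ Gᶜ.CliqueFree k := by
  have hy := H.y_pos
  have hy1 : 1 ≤ y := by linarith [H.le_y]
  have hL1 : 1 ≤ L := by linarith [H.le_L]
  have hL := H.L_pos
  have hm : 0 < m := by exact_mod_cast H.m_pos
  have hF : (0 : ℝ) < F := by exact_mod_cast H.F_pos
  have : Nonempty (Fin n) := ⟨⟨0, hn⟩⟩
  have : Nonempty (Fin m) := ⟨⟨0, hm⟩⟩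
  refine TwoBite.exists_graph (V := Fin n) (M := Fin m) (W := y ^ 30) (D := 0.41 * y ^ 50)
    (d := y ^ 15) (z := 1 / L) (lam := 0.01 / F) (Δ := y ^ 20) (t₁ := y ^ 17) (t₂ := y ^ 5)
    (h := 10 * k) (i := 50 * k) (q := 401) (Fintype.card_fin n) (Fintype.card_fin m)
    H.p_pos.le H.p_le_one (by positivity) ?_ (by positivity) H.F_pos (by positivity) ?_
    (one_le_pow₀ hy1) (one_le_pow₀ hy1) (by positivity) ?_ H.κ_add.le ?_ H.b_bound rfl H.colour_le
    (Real.exp_pos _) H.average_le H.fibre_le H.degree_le H.codegree_le H.heavy_le H.inner_le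
    (H.open_le H.eta_mul_le)
  · rw [div_le_one hL]
    exact hL1
  · rw [div_mul_cancel₀ _ hF.ne']
    norm_num
  · push_cast
    rw [H.k_eq]
    calc 2 * (10 * y ^ 50) = 20 * y ^ 30 * y ^ 20 := by ring
      _ ≤ s * y ^ 20 := by
          have := H.le_s
          gcongr
  · have hp := H.p_pos
    calc p * (F * y ^ 15) ^ 2 ≤ p * (2 * y * y ^ 15) ^ 2 := by
          have := H.F_le
          gcongr
      _ = 4 * (p * y ^ 32) := by ring
      _ ≤ 1 := by
          rw [H.p_eq, div_mul_eq_mul_div, ← mul_div_assoc, div_le_one (by positivity)]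
          have := H.mul_le 4.8 1 32 50
          linarith

end Params

end Parameters

section Main

open Filter

theorem eventually_log_large : ∀ᶠ k : ℕ in atTop, 10 ^ 6 ≤ Real.log k ∧
    Real.log k ^ 10 ≤ Real.exp (Real.log k / 50) ∧
    10 ^ 7 * Real.log (Real.log k) ≤ Real.log k := by
  have hlog : Tendsto (fun k : ℕ => Real.log k) atTop atTop :=
    Real.tendsto_log_atTop.comp tendsto_natCast_atTop_atTop
  have h1 : ∀ᶠ L : ℝ in atTop, L ^ 10 ≤ Real.exp (L / 50) := by
    filter_upwards [(isLittleO_pow_exp_pos_mul_atTop (k := 10)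
      (show (0 : ℝ) < 1 / 50 by norm_num)).bound one_pos] with L hL
    rw [one_mul, Real.norm_eq_abs, Real.norm_eq_abs, Real.abs_exp, one_div_mul_eq_div] at hL
    exact (le_abs_self _).trans hL
  have h2 : ∀ᶠ L : ℝ in atTop, 10 ^ 7 * Real.log L ≤ L := by
    filter_upwards [Real.isLittleO_log_id_atTop.bound (show (0 : ℝ) < 1 / 10 ^ 7 by norm_num),
      eventually_ge_atTop 0] with L hL hL0
    rw [id, Real.norm_eq_abs, Real.norm_eq_abs, abs_of_nonneg hL0] at hL
    have := (le_abs_self _).trans hL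
    linarith
  exact hlog.eventually ((eventually_ge_atTop _).and (h1.and h2))

theorem ceil_le_two_mul {x : ℝ} (hx : 1 ≤ x) : (⌈x⌉₊ : ℝ) ≤ 2 * x := by
  have := Nat.ceil_lt_add_one (show 0 ≤ x by linarith)
  linarith

theorem exists_params {k n : ℕ} (h1 : 10 ^ 6 ≤ Real.log k)
    (h2 : Real.log k ^ 10 ≤ Real.exp (Real.log k / 50))
    (h3 : 10 ^ 7 * Real.log (Real.log k) ≤ Real.log k) (hn : 3 * Real.log k * n ≤ (k : ℝ) ^ 2) :
    ∃ m F s b κ : ℕ, ∃ y L p : ℝ, Params k n m F s b κ y L p := by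
  set L := Real.log k with hL
  set y := Real.exp (L / 50) with hy
  have hk : (0 : ℝ) < k := by
    rcases Nat.eq_zero_or_pos k with h | h
    · rw [hL, h] at h1
      norm_num at h1
    · exact_mod_cast h
  have hyL : 10 ^ 6 ≤ y := h1.trans ((le_self_pow₀ (by linarith) (by norm_num)).trans h2)
  have hy1 : 1 ≤ y := by linarith
  have hky : (k : ℝ) = y ^ 50 := by
    rw [← Real.exp_log hk, ← hL, hy, ← Real.exp_nat_mul]
    congr 1
    push_cast
    ring
  have hs : (⌈20 * y ^ 30⌉₊ : ℝ) ≤ 21 * y ^ 30 := by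
    have h4 := Nat.ceil_lt_add_one (show 0 ≤ 20 * y ^ 30 by positivity)
    have h5 : 1 ≤ y ^ 30 := one_le_pow₀ hy1
    linarith
  have hF : (⌈y⌉₊ : ℝ) ≤ 2 * y := ceil_le_two_mul hy1
  have hκ : 2 * (⌈20 * y ^ 30⌉₊ * ⌈y⌉₊) ≤ k := by
    have : (2 * (⌈20 * y ^ 30⌉₊ * ⌈y⌉₊) : ℝ) ≤ k := by
      calc (2 * (⌈20 * y ^ 30⌉₊ * ⌈y⌉₊) : ℝ) ≤ 2 * (21 * y ^ 30 * (2 * y)) := by gcongr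
        _ = 84 * y ^ 31 := by ring
        _ ≤ y ^ 1 * y ^ 31 := by
            gcongr
            linarith
        _ = y ^ 32 := by ring
        _ ≤ y ^ 50 := pow_le_pow_right₀ hy1 (by norm_num)
        _ = k := hky.symm
    exact_mod_cast this
  refine ⟨⌈y ^ 99⌉₊, ⌈y⌉₊, ⌈20 * y ^ 30⌉₊, ⌈y ^ 22⌉₊, k - 2 * (⌈20 * y ^ 30⌉₊ * ⌈y⌉₊), y, L,
    1.2 * L / y ^ 50, Real.exp_log hk, rfl, h1, h2, h3, rfl, ?_, Nat.le_ceil _,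
    ceil_le_two_mul (one_le_pow₀ hy1), Nat.le_ceil _, hF, Nat.le_ceil _, hs, Nat.le_ceil _,
    ceil_le_two_mul (one_le_pow₀ hy1), Nat.sub_add_cancel hκ⟩
  refine hn.trans (le_of_eq ?_)
  rw [hky]
  ring

end Main

end TwoBite

/-- **Lower bound for the off-diagonal Ramsey number `R(3,k)`.**
For every `ε ∈ (0, 1/3)` and all sufficiently large `k`, setting
`n = ⌊(1/3 − ε)·k²/log k⌋`, there is a triangle-free graph on `n` vertices with no
independent set of size `k` (i.e. the complement is `K_k`-free); hence
`R(3,k) > (1/3 − ε)·k²/log k`. -/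
theorem ramsey_three_k_lower_bound :
    ∀ ε : ℝ, 0 < ε → ε < 1 / 3 →
      ∃ k₀ : ℕ, ∀ k : ℕ, k₀ ≤ k →
        ∃ G : SimpleGraph (Fin ⌊(1 / 3 - ε) * (k : ℝ) ^ 2 / Real.log k⌋₊),
          G.CliqueFree 3 ∧ Gᶜ.CliqueFree k := by
  intro ε hε0 hε
  obtain ⟨k₀, hk₀⟩ := Filter.eventually_atTop.1 TwoBite.eventually_log_large
  refine ⟨max k₀ 1, fun k hk => ?_⟩
  obtain ⟨h1, h2, h3⟩ := hk₀ k ((le_max_left _ _).trans hk)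
  have hlog : 0 < Real.log k := by linarith
  set n := ⌊(1 / 3 - ε) * (k : ℝ) ^ 2 / Real.log k⌋₊ with hn
  rcases Nat.eq_zero_or_pos n with h0 | h0
  · have hcard : ∀ j, 0 < j → ∀ G : SimpleGraph (Fin n), G.CliqueFree j := fun j hj G =>
      SimpleGraph.cliqueFree_of_card_lt (by rwa [Fintype.card_fin, h0])
    exact ⟨⊥, hcard 3 (by norm_num) _, hcard k (by omega) _⟩
  · have hle : (n : ℝ) ≤ (1 / 3 - ε) * (k : ℝ) ^ 2 / Real.log k :=
      Nat.floor_le (div_nonneg (mul_nonneg (by linarith) (sq_nonneg _)) hlog.le)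
    rw [le_div_iff₀ hlog] at hle
    have hk2 : 0 ≤ ε * (k : ℝ) ^ 2 := by positivity
    obtain ⟨m, F, s, b, κ, y, L, p, H⟩ := TwoBite.exists_params (n := n) h1 h2 h3 (by linarith)
    exact H.exists_graph h0
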